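/- arXiv:1108.1612 — 3 statements merged into one kernel-verified Lean document; each statement's English description precedes it below -/
import Mathlib

section
/- Let f : ℂP² ⇢ ℂP² be a dominant rational map (given by coprime homogeneous polynomials of degree e) such that the image of every line lies in a conic (a plane curve of degree at most 2). Then e ≤ 2. -/
/-!
By coprimality some line `L` carries no base point of `F`; let `q` be a conic containing its image.
Choose a general point `x`, so that `z = F x` lies off `q`, and project `F` from `z`. A common
divisor of the projected coordinates would vanish somewhere on `L`, where `F` would then be
proportional to `z`; as `q` separates `z` from the image of `L`, the projected map is coprime.

Hence on a general line through `x` the map is, up to a scalar, `h z + (0, a, b)` with coprime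
univariate polynomials `a` and `b`. Here `deg h = e`, while `max (deg a) (deg b) = e - 1` because
the projected map has a simple zero at `x`, which is placed at infinity on the line. The conic
containing the image of this line passes through `z`, so its equation becomes
`h ℓ(a, b) + Q(a, b) = 0` with `ℓ` linear and `Q` quadratic. After a linear change of `a` and `b`
one may take `ℓ = a` (or `ℓ = 0`), and then coprimality forces `e ≤ 2`.
-/

section Univariate

open Polynomial

variable {K : Type*} [Field K]

theorem eval_mul_eval_eq_of_wronskian_eq_zero [CharZero K] {p q : K[X]} (h : wronskian p q = 0)
    (s t : K) : p.eval s * q.eval t = q.eval s * p.eval t := by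
  rcases eq_or_ne q 0 with rfl | hq
  · simp
  obtain ⟨g, a, b, hg, rfl, rfl, hab⟩ :
      ∃ g a b : K[X], g ≠ 0 ∧ p = g * a ∧ q = g * b ∧ IsCoprime a b := by
    let _ : GCDMonoid K[X] := UniqueFactorizationMonoid.toGCDMonoid _
    obtain ⟨a, b, ha, hb, hab⟩ := extract_gcd p q
    exact ⟨gcd p q, a, b, gcd_ne_zero_of_right hq, ha, hb, (gcd_isUnit_iff a b).1 hab⟩
  have hw : wronskian (g * a) (g * b) = g ^ 2 * wronskian a b := by
    rw [wronskian, wronskian, derivative_mul, derivative_mul]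
    ring
  rw [hw, mul_eq_zero_iff_left (pow_ne_zero 2 hg), hab.wronskian_eq_zero_iff] at h
  rw [eq_C_of_derivative_eq_zero h.1, eq_C_of_derivative_eq_zero h.2]
  simp only [eval_mul, eval_C]
  ring

theorem eq_zero_and_eq_zero_of_wronskian_ne_zero {a b : K[X]} (hw : wronskian a b ≠ 0) {c d : K}
    (h : C c * a + C d * b = 0) : c = 0 ∧ d = 0 := by
  have h' := congrArg derivative h
  simp only [derivative_add, derivative_C_mul, derivative_zero] at h'
  constructor <;> refine C_eq_zero.1 ((mul_eq_zero_iff_right hw).1 ?_) <;> rw [wronskian]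
  · linear_combination derivative b * h - b * h'
  · linear_combination a * h' - derivative a * h

theorem natDegree_eq_zero_of_quadratic_relation [CharZero K] {a b : K[X]} (hab : IsCoprime a b)
    {k₀ k₁ k₂ : K} (hk : ¬(k₀ = 0 ∧ k₁ = 0 ∧ k₂ = 0))
    (h : C k₀ * a ^ 2 + C k₁ * (a * b) + C k₂ * b ^ 2 = 0) :
    a.natDegree = 0 ∧ b.natDegree = 0 := by
  suffices hw : wronskian a b = 0 by
    simpa only [derivative_eq_zero] using hab.wronskian_eq_zero_iff.1 hw
  by_contra hw
  have hder := congrArg derivative h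
  simp only [derivative_add, derivative_mul, derivative_C, derivative_sq, derivative_zero,
    map_ofNat] at hder
  -- The Wronskian annihilates both partial derivatives of the quadratic form.
  have h₁ : C (2 * k₀) * a + C k₁ * b = 0 := by
    refine (mul_eq_zero_iff_left hw).1 ?_
    rw [wronskian, C_mul, map_ofNat]
    linear_combination 2 * derivative b * h - b * hder
  have h₂ : C k₁ * a + C (2 * k₂) * b = 0 := by
    refine (mul_eq_zero_iff_left hw).1 ?_
    rw [wronskian, C_mul, map_ofNat]
    linear_combination a * hder - 2 * derivative a * h
  have hk₀₁ := eq_zero_and_eq_zero_of_wronskian_ne_zero hw h₁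
  have hk₂ := (eq_zero_and_eq_zero_of_wronskian_ne_zero hw h₂).2
  exact hk ⟨by simpa using hk₀₁.1, hk₀₁.2, by simpa using hk₂⟩

theorem natDegree_C_mul_add_C_mul_le (c d : K) (p q : K[X]) :
    (C c * p + C d * q).natDegree ≤ max p.natDegree q.natDegree :=
  (natDegree_add_le _ _).trans (max_le_max (natDegree_C_mul_le c p) (natDegree_C_mul_le d q))

theorem natDegree_le_two_of_mul_left_add_quadratic_eq_zero {h u w : K[X]} {k₀ k₁ k₂ : K}
    (hh : h.natDegree = max u.natDegree w.natDegree + 1) (huw : IsCoprime u w)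
    (H : h * u + (C k₀ * u ^ 2 + C k₁ * (u * w) + C k₂ * w ^ 2) = 0) : h.natDegree ≤ 2 := by
  by_cases hk : k₂ = 0
  · have hfac : u * (h + (C k₀ * u + C k₁ * w)) = 0 := by
      rw [hk, C_0] at H
      linear_combination H
    rcases mul_eq_zero.1 hfac with rfl | hlin
    · have hw := natDegree_eq_zero_of_isUnit (isCoprime_zero_left.1 huw)
      rw [natDegree_zero] at hh
      omega
    · have hle := natDegree_C_mul_add_C_mul_le k₀ k₁ u w
      rw [← natDegree_neg, ← eq_neg_of_add_eq_zero_left hlin] at hle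
      omega
  · have hunit : IsUnit u := by
      refine (huw.pow_right (n := 2)).isUnit_of_dvd
        (((isUnit_C.2 (Ne.isUnit hk)).dvd_mul_left).1 ⟨-(h + C k₀ * u + C k₁ * w), ?_⟩)
      linear_combination H
    have hu := natDegree_eq_zero_of_isUnit hunit
    have hle : (u * (h + C k₀ * u + C k₁ * w)).natDegree ≤ h.natDegree := by
      compute_degree
      omega
    rw [show u * (h + C k₀ * u + C k₁ * w) = -(C k₂ * w ^ 2) by linear_combination H,
      natDegree_neg, natDegree_C_mul hk, natDegree_pow] at hle
    omega

theorem exists_mul_sub_mul_eq_one {c d : K} (h : ¬(c = 0 ∧ d = 0)) :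
    ∃ r s : K, c * s - d * r = 1 := by
  by_cases hc : c = 0
  · exact ⟨-d⁻¹, 0, by simp [mul_inv_cancel₀ fun hd => h ⟨hc, hd⟩]⟩
  · exact ⟨0, c⁻¹, by simp [hc]⟩

theorem natDegree_le_two_of_mul_linear_add_quadratic_eq_zero [CharZero K] {h a b : K[X]}
    {k₁ k₂ k₃ k₄ k₅ : K} (hh : h.natDegree = max a.natDegree b.natDegree + 1)
    (hab : IsCoprime a b) (hk : ¬(k₁ = 0 ∧ k₂ = 0 ∧ k₃ = 0 ∧ k₄ = 0 ∧ k₅ = 0))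
    (H : h * (C k₁ * a + C k₂ * b) + (C k₃ * a ^ 2 + C k₄ * (a * b) + C k₅ * b ^ 2) = 0) :
    h.natDegree ≤ 2 := by
  by_cases hk₁₂ : k₁ = 0 ∧ k₂ = 0
  · obtain ⟨rfl, rfl⟩ := hk₁₂
    have := natDegree_eq_zero_of_quadratic_relation hab (k₀ := k₃) (k₁ := k₄) (k₂ := k₅)
      (fun h => hk ⟨rfl, rfl, h⟩) (by simpa using H)
    omega
  -- Complete the linear form `k₁ a + k₂ b` to a unimodular change of coordinates.
  obtain ⟨m₁, m₂, hm⟩ := exists_mul_sub_mul_eq_one hk₁₂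
  have hC : C k₁ * C m₂ - C k₂ * C m₁ = 1 := by rw [← C_mul, ← C_mul, ← C_sub, hm, C_1]
  obtain ⟨u, hu⟩ : ∃ u, u = C k₁ * a + C k₂ * b := ⟨_, rfl⟩
  obtain ⟨w, hw⟩ : ∃ w, w = C m₁ * a + C m₂ * b := ⟨_, rfl⟩
  have ha : a = C m₂ * u + C (-k₂) * w := by
    rw [C_neg]
    linear_combination -a * hC - C m₂ * hu + C k₂ * hw
  have hb : b = C (-m₁) * u + C k₁ * w := by
    rw [C_neg]
    linear_combination -b * hC + C m₁ * hu - C k₁ * hw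
  have hmax : max a.natDegree b.natDegree = max u.natDegree w.natDegree := by
    refine le_antisymm (max_le ?_ ?_) (max_le ?_ ?_)
    exacts [ha ▸ natDegree_C_mul_add_C_mul_le .., hb ▸ natDegree_C_mul_add_C_mul_le ..,
      hu ▸ natDegree_C_mul_add_C_mul_le .., hw ▸ natDegree_C_mul_add_C_mul_le ..]
  have huw : IsCoprime u w := by
    obtain ⟨r, s, hrs⟩ := hab
    rw [ha, hb] at hrs
    exact ⟨r * C m₂ + s * C (-m₁), r * C (-k₂) + s * C k₁, by linear_combination hrs⟩
  rw [hmax] at hh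
  refine natDegree_le_two_of_mul_left_add_quadratic_eq_zero hh huw
    (k₀ := k₃ * m₂ ^ 2 - k₄ * (m₁ * m₂) + k₅ * m₁ ^ 2)
    (k₁ := k₄ * (k₁ * m₂ + k₂ * m₁) - 2 * (k₃ * (k₂ * m₂) + k₅ * (k₁ * m₁)))
    (k₂ := k₃ * k₂ ^ 2 - k₄ * (k₁ * k₂) + k₅ * k₁ ^ 2) ?_
  rw [← hu, ha, hb] at H
  simp only [C_add, C_sub, C_neg, C_mul, C_pow, map_ofNat] at H ⊢
  linear_combination H

end Univariate

section Bezout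

open Polynomial

variable {ι R : Type*} [CommRing R] [IsDomain R] [UniqueFactorizationMonoid R]

theorem span_map_fractionRing_eq_top (f : ι → R[X])
    (hf : ∀ D, (∀ i, D ∣ f i) → IsUnit D) :
    Ideal.span (Set.range fun i => (f i).map (algebraMap R (FractionRing R))) = ⊤ := by
  let _ : NormalizedGCDMonoid R := Nonempty.some inferInstance
  obtain ⟨d, hd⟩ := (IsPrincipalIdealRing.principal
    (Ideal.span (Set.range fun i => (f i).map (algebraMap R (FractionRing R))))).principal
  rw [Ideal.submodule_span_eq] at hd
  rw [hd, Ideal.span_singleton_eq_top]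
  have hdf : ∀ i, d ∣ (f i).map (algebraMap R (FractionRing R)) := fun i => by
    rw [← Ideal.mem_span_singleton, ← hd]
    exact Ideal.subset_span ⟨i, rfl⟩
  have hd0 : d ≠ 0 := by
    rintro rfl
    refine not_isUnit_zero (hf 0 fun i => ?_)
    rw [zero_dvd_iff, ← Polynomial.map_eq_zero_iff (IsFractionRing.injective R (FractionRing R))]
    exact zero_dvd_iff.1 (hdf i)
  refine isUnit_or_eq_zero_of_isUnit_integerNormalization_primPart (R := R) hd0
    (hf _ fun i => ?_)
  refine (isPrimitive_primPart _).dvd_of_fraction_map_dvd_fraction_map (K := FractionRing R)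
    (dvd_trans ?_ (hdf i))
  obtain ⟨c, hc0, hc⟩ := IsLocalization.integerNormalization_spec (nonZeroDivisors R) d
  rw [Algebra.smul_def, Polynomial.algebraMap_apply] at hc
  have hc' := IsFractionRing.to_map_ne_zero_of_mem_nonZeroDivisors (K := FractionRing R) hc0
  rw [← (isUnit_C.2 hc'.isUnit).dvd_mul_left, ← hc]
  exact Polynomial.map_dvd _ (primPart_dvd _)

theorem exists_C_mem_span_of_isUnit_of_dvd (f : ι → R[X])
    (hf : ∀ D, (∀ i, D ∣ f i) → IsUnit D) :
    ∃ r ≠ 0, C r ∈ Ideal.span (Set.range f) := by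
  let _ : Algebra R[X] (FractionRing R)[X] := Polynomial.algebra R (FractionRing R)
  have h1 : (1 : (FractionRing R)[X]) ∈
      (Ideal.span (Set.range f)).map (algebraMap R[X] (FractionRing R)[X]) := by
    rw [Ideal.map_span, ← Set.range_comp]
    exact span_map_fractionRing_eq_top f hf ▸ Submodule.mem_top
  have := Polynomial.isLocalization (nonZeroDivisors R) (FractionRing R)
  obtain ⟨⟨⟨g, hg⟩, _, r, hr, rfl⟩, h⟩ := (IsLocalization.mem_map_algebraMap_iff
    ((nonZeroDivisors R).map (C : R →+* R[X])) _).1 h1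
  have hgr : g = C r := by
    rw [one_mul] at h
    exact map_injective _ (IsFractionRing.injective R (FractionRing R)) h.symm
  exact ⟨r, nonZeroDivisors.ne_zero hr, hgr ▸ hg⟩

end Bezout

section RestrictLine

open MvPolynomial

variable {σ R A B : Type*} [CommSemiring R] [CommSemiring A] [CommSemiring B] [Algebra R A]
  [Algebra R B]

/-- The restriction of a polynomial to the parametrized line `t ↦ p + t u`. The coordinates of
`p` and `u` live in an `R`-algebra, so that `p` may be the generic point `X`. -/
noncomputable def restrictLine (p u : σ → A) : MvPolynomial σ R →ₐ[R] Polynomial A :=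
  aeval fun k => Polynomial.C (p k) + Polynomial.C (u k) * Polynomial.X

theorem restrictLine_X (p u : σ → A) (k : σ) :
    restrictLine p u (X k : MvPolynomial σ R) =
      Polynomial.C (p k) + Polynomial.C (u k) * Polynomial.X :=
  aeval_X _ k

theorem restrictLine_C (p u : σ → A) (r : R) :
    restrictLine p u (C r) = Polynomial.C (algebraMap R A r) :=
  aeval_C _ r

theorem map_restrictLine (φ : A →ₐ[R] B) (p u : σ → A) (F : MvPolynomial σ R) :
    (restrictLine p u F).map φ = restrictLine (φ ∘ p) (φ ∘ u) F := by
  suffices h : (Polynomial.mapAlgHom φ).comp (restrictLine p u) = restrictLine (φ ∘ p) (φ ∘ u) from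
    DFunLike.congr_fun h F
  ext1 k
  simp [restrictLine_X]

theorem map_restrictLine_X (p u : σ → R) (F : MvPolynomial σ R) :
    (restrictLine X (C ∘ u) F).map (eval p) = restrictLine p u F := by
  have hX : (aeval p : MvPolynomial σ R →ₐ[R] R) ∘ X = p := funext fun k => aeval_X p k
  have hC : (aeval p : MvPolynomial σ R →ₐ[R] R) ∘ C ∘ u = u := funext fun k => aeval_C p (u k)
  have h := map_restrictLine (aeval p) X (C ∘ u) F
  rwa [hX, hC] at h

theorem eval_restrictLine (p u : σ → A) (t : A) (F : MvPolynomial σ R) :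
    (restrictLine p u F).eval t = aeval (p + t • u) F := by
  suffices h : ((Polynomial.aeval t).restrictScalars R).comp (restrictLine p u) =
      aeval (p + t • u) from (Polynomial.coe_aeval_eq_eval t).symm ▸ DFunLike.congr_fun h F
  ext1 k
  simp [restrictLine_X, mul_comm t]

theorem taylor_restrictLine (p u : σ → A) (t : A) (F : MvPolynomial σ R) :
    Polynomial.taylor t (restrictLine p u F) = restrictLine (p + t • u) u F := by
  suffices h : ((Polynomial.taylorAlgHom t).restrictScalars R).comp (restrictLine p u) =
      restrictLine (p + t • u) u from DFunLike.congr_fun h F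
  ext1 k
  simp only [AlgHom.coe_comp, AlgHom.coe_restrictScalars', Function.comp_apply, restrictLine_X,
    Polynomial.taylorAlgHom_apply, map_add, Polynomial.taylor_C, Polynomial.taylor_X,
    Pi.add_apply, Pi.smul_apply, smul_eq_mul, map_mul]
  ring

theorem natDegree_restrictLine_le (p u : σ → A) {F : MvPolynomial σ R} {n : ℕ}
    (hF : F.IsHomogeneous n) : (restrictLine p u F).natDegree ≤ n := by
  rw [restrictLine, ← aeval_map_algebraMap A, ← mul_one n]
  exact aeval_natDegree_le _ (hF.map _).totalDegree_le _ fun k => by compute_degree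

theorem reflect_restrictLine (p u : σ → A) {F : MvPolynomial σ R} {n : ℕ}
    (hF : F.IsHomogeneous n) : (restrictLine p u F).reflect n = restrictLine u p F := by
  have linear {m : MvPolynomial σ R} (hm : m ∈ homogeneousSubmodule σ R 1) :
      (restrictLine p u m).reflect 1 = restrictLine u p m := by
    rw [homogeneousSubmodule_one_eq_span_X] at hm
    induction hm using Submodule.span_induction with
    | mem _ hk =>
      obtain ⟨k, rfl⟩ := hk
      rw [restrictLine_X, restrictLine_X, Polynomial.reflect_add, Polynomial.reflect_C_mul,
        Polynomial.reflect_C, Polynomial.reflect_one_X, pow_one, mul_one, add_comm]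
    | zero => simp
    | add m m' _ _ hm hm' => rw [map_add, map_add, Polynomial.reflect_add, hm, hm']
    | smul r m _ hm =>
      rw [← C_mul', map_mul, map_mul, restrictLine_C, restrictLine_C, Polynomial.reflect_C_mul, hm]
  rw [← mem_homogeneousSubmodule, ← homogeneousSubmodule_one_pow] at hF
  induction hF using Submodule.pow_induction_on_left' with
  | algebraMap r => simp
  | add F G n _ _ hF hG => rw [map_add, map_add, Polynomial.reflect_add, hF, hG]
  | mem_mul m hm n F hF ih =>
    rw [homogeneousSubmodule_one_pow] at hF
    rw [map_mul, map_mul, Nat.succ_eq_one_add, Polynomial.reflect_mul _ _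
      (natDegree_restrictLine_le p u hm) (natDegree_restrictLine_le p u hF), linear hm, ih]

theorem coeff_restrictLine_of_isHomogeneous (p u : σ → A) {F : MvPolynomial σ R} {m n : ℕ}
    (hF : F.IsHomogeneous (m + n)) :
    (restrictLine p u F).coeff m = (restrictLine u p F).coeff n := by
  rw [← reflect_restrictLine u p hF, Polynomial.coeff_reflect, Polynomial.revAt_le (by omega),
    Nat.add_sub_cancel_left]

theorem coeff_zero_restrictLine (p u : σ → A) (F : MvPolynomial σ R) :
    (restrictLine p u F).coeff 0 = aeval p F := by
  rw [Polynomial.coeff_zero_eq_eval_zero, eval_restrictLine, zero_smul, add_zero]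

theorem coeff_restrictLine_eq_aeval (p u : σ → A) {F : MvPolynomial σ R} {n : ℕ}
    (hF : F.IsHomogeneous n) : (restrictLine p u F).coeff n = aeval u F := by
  rw [coeff_restrictLine_of_isHomogeneous p u (n := 0) hF, coeff_zero_restrictLine]

theorem natDegree_restrictLine_eq (p : σ → A) {u : σ → A} {F : MvPolynomial σ R} {n : ℕ}
    (hF : F.IsHomogeneous n) (hu : aeval u F ≠ 0) : (restrictLine p u F).natDegree = n :=
  Polynomial.natDegree_eq_of_le_of_coeff_ne_zero (natDegree_restrictLine_le p u hF)
    ((coeff_restrictLine_eq_aeval p u hF).trans_ne hu)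

theorem aeval_smul_of_isHomogeneous (c : A) (p : σ → A) {F : MvPolynomial σ R} {n : ℕ}
    (hF : F.IsHomogeneous n) : aeval (c • p) F = c ^ n * aeval p F := by
  have hconst : restrictLine p 0 F = Polynomial.C (aeval p F) := by
    rw [← Polynomial.algebraMap_eq, ← aeval_algebraMap_apply]
    simp only [restrictLine, Pi.zero_apply, map_zero, zero_mul, add_zero]
    rfl
  have h := congrArg (Polynomial.eval c) (reflect_restrictLine p 0 hF)
  rw [hconst, Polynomial.reflect_C, eval_restrictLine, zero_add, Polynomial.eval_mul,
    Polynomial.eval_C, Polynomial.eval_pow, Polynomial.eval_X, mul_comm] at h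
  exact h.symm

end RestrictLine

section GenericLine

open MvPolynomial

section Shear

variable {σ R : Type*} [CommRing R]

/-- The substitution `X ↦ X + t u`, `t ↦ t` in `R[X][t]`, which restricts a polynomial in `X` to
the generic line of direction `u`. -/
noncomputable def shear (u : σ → R) :
    Polynomial (MvPolynomial σ R) →ₐ[R] Polynomial (MvPolynomial σ R) :=
  Polynomial.eval₂AlgHom (restrictLine X (C ∘ u)) Polynomial.X fun _ => .all _ _

theorem shear_C (u : σ → R) (F : MvPolynomial σ R) :
    shear u (Polynomial.C F) = restrictLine X (C ∘ u) F :=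
  Polynomial.eval₂_C _ _

theorem shear_X (u : σ → R) : shear u Polynomial.X = Polynomial.X :=
  Polynomial.eval₂_X _ _

theorem shear_shear_neg (u : σ → R) (p : Polynomial (MvPolynomial σ R)) :
    shear u (shear (-u) p) = p := by
  suffices h : (shear u).comp (shear (-u)) = AlgHom.id R _ from DFunLike.congr_fun h p
  apply Polynomial.algHom_ext'
  · ext1 k
    change shear u (shear (-u) (Polynomial.C (X k))) = Polynomial.C (X k)
    rw [shear_C, restrictLine_X, map_add, map_mul, shear_X, shear_C, shear_C, restrictLine_X,
      Function.comp_apply, Function.comp_apply, restrictLine_C, algebraMap_eq, Pi.neg_apply, C_neg,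
      Polynomial.C_neg]
    ring
  · change shear u (shear (-u) Polynomial.X) = Polynomial.X
    rw [shear_X, shear_X]

end Shear

theorem isUnit_of_forall_dvd_C {ι R : Type*} [CommRing R] [IsDomain R] {g : ι → R}
    (hg : ∀ d, (∀ i, d ∣ g i) → IsUnit d) {D : Polynomial R}
    (hD : ∀ i, D ∣ Polynomial.C (g i)) : IsUnit D := by
  obtain ⟨j, hj⟩ : ∃ j, g j ≠ 0 := by
    by_contra! h0
    exact not_isUnit_zero (hg 0 fun i => (h0 i).symm ▸ dvd_rfl)
  obtain ⟨d, rfl⟩ := Polynomial.natDegree_eq_zero.1 (Nat.le_zero.1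
    ((Polynomial.natDegree_le_of_dvd (hD j) (Polynomial.C_ne_zero.2 hj)).trans_eq
      (Polynomial.natDegree_C _)))
  exact Polynomial.isUnit_C.2 (hg d fun i => by
    simpa using (Polynomial.C_dvd_iff_dvd_coeff _ _).1 (hD i) 0)

section Field

variable {ι σ K : Type*} [Field K] {G : ι → MvPolynomial σ K}

theorem exists_C_mem_span_restrictLine_X (hG : ∀ D, (∀ i, D ∣ G i) → IsUnit D) (u : σ → K) :
    ∃ r ≠ 0, Polynomial.C r ∈
      Ideal.span (Set.range fun i => restrictLine X (C ∘ u) (G i)) := by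
  refine exists_C_mem_span_of_isUnit_of_dvd _ fun D hD => ?_
  have hunit : IsUnit (shear (-u) D) := isUnit_of_forall_dvd_C hG fun i => by
    have := map_dvd (shear (-u)) (hD i)
    rwa [← shear_C, ← neg_neg u, neg_neg (-u), shear_shear_neg] at this
  exact shear_shear_neg u D ▸ hunit.map (shear u)

theorem exists_eval_ne_zero [Infinite K] {P : MvPolynomial σ K} (hP : P ≠ 0) :
    ∃ v, eval v P ≠ 0 := by
  by_contra! h
  exact hP (MvPolynomial.funext fun v => by rw [h, map_zero])

theorem exists_line_forall_exists_eval_ne_zero [Infinite K]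
    (hG : ∀ D, (∀ i, D ∣ G i) → IsUnit D) (u : σ → K) {P : MvPolynomial σ K} (hP : P ≠ 0) :
    ∃ v, eval v P ≠ 0 ∧ ∀ t : K, ∃ i, eval (v + t • u) (G i) ≠ 0 := by
  obtain ⟨r, hr, hspan⟩ := exists_C_mem_span_restrictLine_X hG u
  obtain ⟨v, hv⟩ := exists_eval_ne_zero (mul_ne_zero hP hr)
  rw [map_mul, mul_ne_zero_iff] at hv
  refine ⟨v, hv.1, fun t => ?_⟩
  by_contra! hzero
  let evalAt := (Polynomial.evalRingHom t).comp (Polynomial.mapRingHom (eval v))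
  have hle : Ideal.span (Set.range fun i => restrictLine X (C ∘ u) (G i)) ≤ RingHom.ker evalAt := by
    rw [Ideal.span_le]
    rintro _ ⟨i, rfl⟩
    change Polynomial.eval t (Polynomial.map (eval v) _) = 0
    rw [map_restrictLine_X, eval_restrictLine, aeval_eq_eval, hzero]
  refine hv.2 ?_
  simpa [evalAt] using hle hspan

end Field

end GenericLine

section HomogeneousDivisors

open MvPolynomial

theorem homogeneousComponent_mul_of_totalDegree_le {σ R : Type*} [CommSemiring R]
    {p q : MvPolynomial σ R} {m n : ℕ} (hp : p.totalDegree ≤ m) (hq : q.totalDegree ≤ n) :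
    homogeneousComponent (m + n) (p * q) =
      homogeneousComponent m p * homogeneousComponent n q := by
  classical
  ext d
  have hom := (homogeneousComponent_isHomogeneous m p).mul (homogeneousComponent_isHomogeneous n q)
  rw [coeff_homogeneousComponent]
  split_ifs with hd
  · rw [coeff_mul, coeff_mul]
    refine Finset.sum_congr rfl fun ⟨a, b⟩ hab => ?_
    dsimp only
    have hsum : a.degree + b.degree = m + n := by
      rw [← map_add, Finset.HasAntidiagonal.mem_antidiagonal.1 hab, hd]
    rw [coeff_homogeneousComponent, coeff_homogeneousComponent]
    rcases lt_trichotomy a.degree m with h | h | h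
    · rw [coeff_eq_zero_of_totalDegree_lt (hq.trans_lt (show n < b.degree by omega)), mul_zero,
        if_neg h.ne, zero_mul]
    · rw [if_pos h, if_pos (by omega)]
    · rw [coeff_eq_zero_of_totalDegree_lt (hp.trans_lt h), zero_mul, if_neg h.ne', zero_mul]
  · exact (hom.coeff_eq_zero hd).symm

theorem homogeneousComponent_totalDegree_dvd {σ R : Type*} [CommRing R] [IsDomain R]
    {D G : MvPolynomial σ R} {n : ℕ} (hG : G.IsHomogeneous n) (h : D ∣ G) :
    homogeneousComponent D.totalDegree D ∣ G := by
  rcases eq_or_ne G 0 with rfl | hG₀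
  · exact dvd_zero _
  obtain ⟨E, rfl⟩ := h
  refine ⟨homogeneousComponent E.totalDegree E, ?_⟩
  rw [← homogeneousComponent_mul_of_totalDegree_le le_rfl le_rfl,
    ← totalDegree_mul_of_isDomain (left_ne_zero_of_mul hG₀) (right_ne_zero_of_mul hG₀),
    hG.totalDegree hG₀]
  exact (homogeneousComponent_eq_self hG).symm

section AlgClosed

variable {ι σ K : Type*} [Field K]

/-- Representatives of the points of the projective line through `x` and `v`: the point `x`
together with the affine chart `v + s x`. -/
def projLine (x v : σ → K) : Set (σ → K) :=
  insert x (Set.range fun s : K => v + s • x)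

theorem projLine_subset_span (x v : σ → K) : projLine x v ⊆ Submodule.span K {x, v} := by
  rintro _ (rfl | ⟨s, rfl⟩)
  · exact Submodule.mem_span_of_mem (Set.mem_insert _ _)
  · exact Submodule.mem_span_pair.2 ⟨s, 1, by rw [one_smul, add_comm]⟩

variable [IsAlgClosed K]

theorem exists_mem_projLine_eval_eq_zero {D : MvPolynomial σ K} {n : ℕ}
    (hD : D.IsHomogeneous n) (hn : n ≠ 0) (x v : σ → K) :
    ∃ y ∈ projLine x v, eval y D = 0 := by
  by_cases hx : eval x D = 0
  · exact ⟨x, Set.mem_insert _ _, hx⟩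
  have hdeg := natDegree_restrictLine_eq v hD hx
  obtain ⟨s, hs⟩ := IsAlgClosed.exists_root (restrictLine v x D)
    (Polynomial.natDegree_pos_iff_degree_pos.1 (hdeg ▸ Nat.pos_of_ne_zero hn)).ne'
  rw [Polynomial.IsRoot, eval_restrictLine, aeval_eq_eval] at hs
  exact ⟨_, Set.mem_insert_of_mem _ ⟨s, rfl⟩, hs⟩

theorem exists_mem_projLine_forall_eval_eq_zero {G : ι → MvPolynomial σ K} {n : ℕ}
    (hG : ∀ i, (G i).IsHomogeneous n) {D : MvPolynomial σ K} (hD : ¬IsUnit D)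
    (hDG : ∀ i, D ∣ G i) (x v : σ → K) : ∃ y ∈ projLine x v, ∀ i, eval y (G i) = 0 := by
  by_cases hdeg : D.totalDegree = 0
  · rw [totalDegree_eq_zero_iff_eq_C] at hdeg
    have hD₀ : D = 0 := by
      by_contra h
      rw [hdeg, ← ne_eq, C_ne_zero] at h
      exact hD (hdeg ▸ h.isUnit.map C)
    subst hD₀
    exact ⟨x, Set.mem_insert _ _, fun i => by rw [zero_dvd_iff.1 (hDG i), map_zero]⟩
  · obtain ⟨y, hy, hz⟩ := exists_mem_projLine_eval_eq_zero
      (homogeneousComponent_isHomogeneous D.totalDegree D) hdeg x v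
    refine ⟨y, hy, fun i => ?_⟩
    have h := map_dvd (eval y) (homogeneousComponent_totalDegree_dvd (hG i) (hDG i))
    rwa [hz, zero_dvd_iff] at h

end AlgClosed

end HomogeneousDivisors

section Conic

open MvPolynomial

theorem exists_eval_eq_sum_of_isHomogeneous_two {ι R : Type*} [Fintype ι] [CommSemiring R]
    {q : MvPolynomial ι R} (hq : q.IsHomogeneous 2) :
    ∃ M : ι → ι → R, ∀ y, eval y q = ∑ i, ∑ j, M i j * y i * y j := by
  rw [← mem_homogeneousSubmodule, ← homogeneousSubmodule_one_pow, pow_two,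
    homogeneousSubmodule_one_eq_span_X] at hq
  induction hq using Submodule.mul_induction_on' with
  | mem_mul_mem l hl m hm =>
    obtain ⟨a, rfl⟩ := (Submodule.mem_span_range_iff_exists_fun R).1 hl
    obtain ⟨b, rfl⟩ := (Submodule.mem_span_range_iff_exists_fun R).1 hm
    refine ⟨fun i j => a i * b j, fun y => ?_⟩
    simp only [map_mul, map_sum, smul_eval, eval_X, Finset.sum_mul_sum]
    exact Finset.sum_congr rfl fun i _ => Finset.sum_congr rfl fun j _ => by ring
  | add p _ q _ hp hq =>
    obtain ⟨M, hM⟩ := hp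
    obtain ⟨N, hN⟩ := hq
    exact ⟨fun i j => M i j + N i j, fun y => by
      simp only [map_add, hM, hN, add_mul, Finset.sum_add_distrib]⟩

theorem exists_eval_smul_add_eq_of_isHomogeneous_two {K : Type*} [Field K] [Infinite K]
    {q : MvPolynomial (Fin 3) K} (hq₀ : q ≠ 0) (hq : q.IsHomogeneous 2) {z : Fin 3 → K}
    (hz : z 0 ≠ 0) (hqz : eval z q = 0) :
    ∃ k₁ k₂ k₃ k₄ k₅ : K, ¬(k₁ = 0 ∧ k₂ = 0 ∧ k₃ = 0 ∧ k₄ = 0 ∧ k₅ = 0) ∧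
      ∀ h a b, eval (h • z + ![0, a, b]) q =
        h * (k₁ * a + k₂ * b) + (k₃ * a ^ 2 + k₄ * (a * b) + k₅ * b ^ 2) := by
  obtain ⟨M, hM⟩ := exists_eval_eq_sum_of_isHomogeneous_two hq
  rw [hM] at hqz
  simp only [Fin.sum_univ_three] at hM hqz
  refine ⟨∑ i, z i * (M i 1 + M 1 i), ∑ i, z i * (M i 2 + M 2 i), M 1 1, M 1 2 + M 2 1, M 2 2,
    ?_, fun h a b => ?_⟩
  · rintro ⟨h₁, h₂, h₁₁, h₁₂, h₂₂⟩
    rw [Fin.sum_univ_three] at h₁ h₂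
    have h₀₁ : M 0 1 + M 1 0 = 0 := by
      refine (mul_eq_zero_iff_left hz).1 ?_
      linear_combination h₁ - 2 * z 1 * h₁₁ - z 2 * h₁₂
    have h₀₂ : M 0 2 + M 2 0 = 0 := by
      refine (mul_eq_zero_iff_left hz).1 ?_
      linear_combination h₂ - 2 * z 2 * h₂₂ - z 1 * h₁₂
    have h₀₀ : M 0 0 = 0 := by
      refine (mul_eq_zero_iff_left (pow_ne_zero 2 hz)).1 ?_
      linear_combination hqz - z 0 * z 1 * h₀₁ - z 0 * z 2 * h₀₂ - z 1 ^ 2 * h₁₁ -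
        z 1 * z 2 * h₁₂ - z 2 ^ 2 * h₂₂
    refine hq₀ (MvPolynomial.funext fun y => ?_)
    rw [hM, map_zero]
    linear_combination y 0 ^ 2 * h₀₀ + y 0 * y 1 * h₀₁ + y 0 * y 2 * h₀₂ + y 1 ^ 2 * h₁₁ +
      y 1 * y 2 * h₁₂ + y 2 ^ 2 * h₂₂
  · rw [hM]
    simp only [Pi.add_apply, Pi.smul_apply, smul_eq_mul, Matrix.cons_val_zero, add_zero,
      Matrix.cons_val_one, Matrix.cons_val, Fin.sum_univ_three]
    linear_combination h ^ 2 * hqz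

variable {ι σ K : Type*} [Field K] {F : ι → MvPolynomial σ K} {S T : Set (σ → K)}

/-- The map with coordinates `F i` sends `S` into a conic, possibly a degenerate one. -/
def MapsIntoConic (F : ι → MvPolynomial σ K) (S : Set (σ → K)) : Prop :=
  ∃ q : MvPolynomial ι K, q ≠ 0 ∧ q.IsHomogeneous 2 ∧
    ∀ x ∈ S, eval (fun i => eval x (F i)) q = 0

theorem MapsIntoConic.mono (h : MapsIntoConic F T) (hST : S ⊆ T) : MapsIntoConic F S :=
  let ⟨q, hq₀, hq, hz⟩ := h
  ⟨q, hq₀, hq, fun x hx => hz x (hST hx)⟩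

theorem MapsIntoConic.of_degree_le_two [Nonempty ι] {c : MvPolynomial ι K} (hc₀ : c ≠ 0) {d : ℕ}
    (hd : d ≤ 2) (hc : c.IsHomogeneous d)
    (hz : ∀ x ∈ S, eval (fun i => eval x (F i)) c = 0) : MapsIntoConic F S := by
  let i : ι := Classical.arbitrary ι
  refine ⟨c * X i ^ (2 - d), mul_ne_zero hc₀ (pow_ne_zero _ (X_ne_zero i)), ?_, fun x hx => ?_⟩
  · simpa [Nat.add_sub_cancel' hd] using hc.mul (isHomogeneous_X_pow i (2 - d))
  · rw [map_mul, hz x hx, zero_mul]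

theorem exists_linear_form_eq_zero_on_span_pair (x v : Fin 3 → K) :
    ∃ ℓ : MvPolynomial (Fin 3) K, ℓ ≠ 0 ∧ ℓ.IsHomogeneous 1 ∧
      ∀ y ∈ Submodule.span K {x, v}, eval y ℓ = 0 := by
  obtain ⟨w, hw₀, hw⟩ := Matrix.exists_mulVec_eq_zero_iff (M := Matrix.of ![x, v, 0]) |>.2
    (Matrix.det_eq_zero_of_row_eq_zero 2 fun _ => rfl)
  have hℓ (y : Fin 3 → K) : eval y (∑ i, C (w i) * X i) = y ⬝ᵥ w := by
    simp [dotProduct, mul_comm]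
  refine ⟨∑ i, C (w i) * X i, fun h => hw₀ ?_,
    IsHomogeneous.sum _ _ _ fun i _ => isHomogeneous_C_mul_X _ _, fun y hy => ?_⟩
  · funext i
    rw [← single_one_dotProduct i w, ← hℓ, h, map_zero, Pi.zero_apply]
  · obtain ⟨s, t, rfl⟩ := Submodule.mem_span_pair.1 hy
    have hx : x ⬝ᵥ w = 0 := congrFun hw 0
    have hv : v ⬝ᵥ w = 0 := congrFun hw 1
    rw [hℓ, add_dotProduct, smul_dotProduct, smul_dotProduct, hx, hv, smul_zero, smul_zero,
      add_zero]

theorem mapsIntoConic_span_pair {F : ι → MvPolynomial (Fin 3) K}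
    (h : ∀ ℓ, ℓ ≠ 0 → ℓ.IsHomogeneous 1 → MapsIntoConic F {y | eval y ℓ = 0})
    (x v : Fin 3 → K) :
    MapsIntoConic F (Submodule.span K {x, v} : Submodule K (Fin 3 → K)) := by
  obtain ⟨ℓ, hℓ₀, hℓ, hℓz⟩ := exists_linear_form_eq_zero_on_span_pair x v
  exact (h ℓ hℓ₀ hℓ).mono hℓz

end Conic

section Projection

open MvPolynomial

variable {σ K : Type*} [Field K] {F : Fin 3 → MvPolynomial σ K} {e : ℕ}

/-- The composite of `F` with the projection away from the point `F x`, in the coordinates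
`zⱼ ↦ F₀(x) zⱼ - Fⱼ(x) z₀`; these are meant for the chart `F₀(x) ≠ 0`. -/
noncomputable def projectFrom (F : Fin 3 → MvPolynomial σ K) (x : σ → K) (j : Fin 3) :
    MvPolynomial σ K :=
  C (eval x (F 0)) * F j - C (eval x (F j)) * F 0

theorem projectFrom_zero (F : Fin 3 → MvPolynomial σ K) (x : σ → K) : projectFrom F x 0 = 0 :=
  sub_self _

theorem isHomogeneous_projectFrom (hF : ∀ i, (F i).IsHomogeneous e) (x : σ → K) (j : Fin 3) :
    (projectFrom F x j).IsHomogeneous e :=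
  ((hF j).C_mul _).sub ((hF 0).C_mul _)

theorem eval_projectFrom (F : Fin 3 → MvPolynomial σ K) (x y : σ → K) (j : Fin 3) :
    eval y (projectFrom F x j) =
      eval x (F 0) * eval y (F j) - eval x (F j) * eval y (F 0) := by
  simp only [projectFrom, map_sub, map_mul, eval_C]

theorem eval_projectFrom_self (F : Fin 3 → MvPolynomial σ K) (x : σ → K) (j : Fin 3) :
    eval x (projectFrom F x j) = 0 := by
  rw [eval_projectFrom, mul_comm, sub_self]

theorem coeff_one_restrictLine_projectFrom (F : Fin 3 → MvPolynomial σ K) (x w : σ → K) (t : K)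
    (j : Fin 3) : (restrictLine (x + t • w) w (projectFrom F (x + t • w) j)).coeff 1 =
      (Polynomial.wronskian (restrictLine x w (F 0)) (restrictLine x w (F j))).eval t := by
  simp only [← taylor_restrictLine, Polynomial.taylor_coeff_one, projectFrom,
    Polynomial.wronskian, map_sub, map_mul, restrictLine_C, Algebra.algebraMap_self,
    RingHom.id_apply, Polynomial.coeff_sub, Polynomial.coeff_C_mul, Polynomial.eval_sub,
    Polynomial.eval_mul, eval_restrictLine, aeval_eq_eval]
  ring

theorem exists_coeff_one_restrictLine_projectFrom_ne_zero [CharZero K] {H : MvPolynomial σ K}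
    {x y : σ → K} (hH : eval x H ≠ 0) {j : Fin 3} (hy : eval y (projectFrom F x j) ≠ 0) :
    ∃ p w, eval p H ≠ 0 ∧ (restrictLine p w (projectFrom F p j)).coeff 1 ≠ 0 := by
  have hW : Polynomial.wronskian (restrictLine x (y - x) (F 0))
      (restrictLine x (y - x) (F j)) ≠ 0 := by
    intro hW
    have h := eval_mul_eval_eq_of_wronskian_eq_zero hW 0 1
    simp only [eval_restrictLine, aeval_eq_eval, zero_smul, one_smul, add_zero,
      add_sub_cancel] at h
    exact hy (by rw [eval_projectFrom, h, sub_self])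
  have hHline : restrictLine x (y - x) H ≠ 0 := fun h => hH (by
    rw [← aeval_eq_eval, ← coeff_zero_restrictLine x (y - x), h, Polynomial.coeff_zero])
  obtain ⟨t, ht⟩ : ∃ t, Polynomial.eval t (_ * restrictLine x (y - x) H) ≠ 0 := by
    by_contra! h
    exact mul_ne_zero hW hHline (Polynomial.funext fun t => by rw [h, Polynomial.eval_zero])
  rw [Polynomial.eval_mul, mul_ne_zero_iff, ← coeff_one_restrictLine_projectFrom,
    eval_restrictLine] at ht
  exact ⟨_, _, ht.2, ht.1⟩

theorem isUnit_of_forall_dvd_projectFrom [IsAlgClosed K] (hF : ∀ i, (F i).IsHomogeneous e)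
    {x₀ v₀ : σ → K} (hbase : ∀ y ∈ projLine x₀ v₀, ∃ i, eval y (F i) ≠ 0)
    {q : MvPolynomial (Fin 3) K} {n : ℕ} (hq : q.IsHomogeneous n)
    (hqz : ∀ y ∈ projLine x₀ v₀, eval (fun i => eval y (F i)) q = 0)
    {x : σ → K} (hx : eval x (F 0) ≠ 0) (hqx : eval (fun i => eval x (F i)) q ≠ 0)
    (D : MvPolynomial σ K) (hD : ∀ j, D ∣ projectFrom F x j) : IsUnit D := by
  by_contra hunit
  obtain ⟨y, hy, hzero⟩ := exists_mem_projLine_forall_eval_eq_zero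
    (isHomogeneous_projectFrom hF x) hunit hD x₀ v₀
  have hprop (j : Fin 3) :
      eval x (F 0) * eval y (F j) = eval y (F 0) * eval x (F j) := by
    rw [mul_comm (eval y _), ← sub_eq_zero, ← eval_projectFrom, hzero]
  -- `F y` is a multiple of `F x`, and `q` vanishes at `F y` but not at `F x`.
  have hy₀ : eval y (F 0) = 0 := by
    have h : eval (eval x (F 0) • fun i => eval y (F i)) q =
        eval (eval y (F 0) • fun i => eval x (F i)) q :=
      congrArg (eval · q) (funext hprop)
    simp only [← aeval_eq_eval, aeval_smul_of_isHomogeneous _ _ hq] at h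
    simp only [aeval_eq_eval] at h
    rw [hqz y hy, mul_zero, eq_comm, mul_eq_zero_iff_right hqx] at h
    exact eq_zero_of_pow_eq_zero h
  obtain ⟨i, hi⟩ := hbase y hy
  exact mul_ne_zero hx hi (by rw [hprop, hy₀, zero_mul])

theorem exists_direction_isCoprime_restrictLine_projectFrom [IsAlgClosed K] {n : ℕ}
    (hF : ∀ i, (F i).IsHomogeneous (n + 1)) {x w : σ → K}
    (hw : (restrictLine x w (projectFrom F x 1)).coeff 1 ≠ 0)
    (hcop : ∀ D, (∀ j, D ∣ projectFrom F x j) → IsUnit D) :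
    ∃ v, (restrictLine v x (projectFrom F x 1)).coeff n ≠ 0 ∧
      IsCoprime (restrictLine v x (projectFrom F x 1)) (restrictLine v x (projectFrom F x 2)) := by
  let P : MvPolynomial σ K := (restrictLine X (C ∘ x) (projectFrom F x 1)).coeff n
  have hP (v : σ → K) : eval v P = (restrictLine v x (projectFrom F x 1)).coeff n := by
    rw [← map_restrictLine_X, Polynomial.coeff_map]
  have hP₀ : P ≠ 0 := by
    rintro hP₀
    rw [coeff_restrictLine_of_isHomogeneous x w (n := n)
      (add_comm n 1 ▸ isHomogeneous_projectFrom hF x 1), ← hP, hP₀, map_zero] at hw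
    exact hw rfl
  obtain ⟨v, hv, hline⟩ := exists_line_forall_exists_eval_ne_zero hcop x hP₀
  refine ⟨v, hP v ▸ hv, ?_⟩
  rw [Polynomial.isCoprime_iff_aeval_ne_zero_of_isAlgClosed K K]
  intro t
  simpa only [Polynomial.coe_aeval_eq_eval, eval_restrictLine, aeval_eq_eval, Fin.exists_fin_succ,
    Fin.succ_zero_eq_one, Fin.succ_one_eq_two, projectFrom_zero, map_zero, ne_eq,
    not_true_eq_false, false_or, IsEmpty.exists_iff, or_false]
    using hline t

theorem natDegree_restrictLine_eq_max_add_one {n : ℕ} (hF : ∀ i, (F i).IsHomogeneous (n + 1))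
    {x v : σ → K} (hx : eval x (F 0) ≠ 0)
    (hv : (restrictLine v x (projectFrom F x 1)).coeff n ≠ 0) :
    (restrictLine v x (F 0)).natDegree = max (restrictLine v x (projectFrom F x 1)).natDegree
      (restrictLine v x (projectFrom F x 2)).natDegree + 1 := by
  have hG (j : Fin 3) : (restrictLine v x (projectFrom F x j)).natDegree ≤ n := by
    have hhom := isHomogeneous_projectFrom hF x j
    refine Polynomial.natDegree_le_pred (natDegree_restrictLine_le v x hhom) ?_
    rw [coeff_restrictLine_eq_aeval v x hhom, aeval_eq_eval, eval_projectFrom_self]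
  rw [natDegree_restrictLine_eq v (hF 0) hx,
    max_eq_left (le_trans (hG 2) (Polynomial.le_natDegree_of_ne_zero hv)),
    le_antisymm (hG 1) (Polynomial.le_natDegree_of_ne_zero hv)]

theorem degree_le_two_of_isCoprime_restrictLine [CharZero K] {n : ℕ}
    (hF : ∀ i, (F i).IsHomogeneous (n + 1)) {x v : σ → K} (hx : eval x (F 0) ≠ 0)
    (hv : (restrictLine v x (projectFrom F x 1)).coeff n ≠ 0)
    (hcop : IsCoprime (restrictLine v x (projectFrom F x 1))
      (restrictLine v x (projectFrom F x 2)))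
    (hconic : MapsIntoConic F (projLine x v)) : n + 1 ≤ 2 := by
  obtain ⟨q, hq₀, hq, hqz⟩ := hconic
  obtain ⟨k₁, k₂, k₃, k₄, k₅, hk, hexpand⟩ := exists_eval_smul_add_eq_of_isHomogeneous_two hq₀ hq
    (z := fun i => eval x (F i)) hx (hqz x (Set.mem_insert _ _))
  have hdeg := natDegree_restrictLine_eq_max_add_one hF hx hv
  rw [← natDegree_restrictLine_eq v (hF 0) hx]
  refine natDegree_le_two_of_mul_linear_add_quadratic_eq_zero hdeg hcop hk
    (Polynomial.funext fun t => ?_)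
  simp only [Polynomial.eval_add, Polynomial.eval_mul, Polynomial.eval_pow, Polynomial.eval_C,
    Polynomial.eval_zero, eval_restrictLine, aeval_eq_eval]
  set y := v + t • x
  have hsplit : eval x (F 0) • (fun i => eval y (F i)) = eval y (F 0) • (fun i => eval x (F i)) +
      ![0, eval y (projectFrom F x 1), eval y (projectFrom F x 2)] := by
    funext j
    fin_cases j
    · simp [mul_comm]
    all_goals simp [eval_projectFrom, mul_comm]
  rw [← hexpand, ← hsplit, ← aeval_eq_eval, aeval_smul_of_isHomogeneous _ _ hq, aeval_eq_eval,
    hqz y (Set.mem_insert_of_mem _ ⟨t, rfl⟩), mul_zero]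

end Projection

section Degree

open MvPolynomial

variable {σ K : Type*} [Field K] {F : Fin 3 → MvPolynomial σ K}

theorem exists_eval_coordinate_ne_zero (hdom : ¬MapsIntoConic F Set.univ) (i : Fin 3) :
    ∃ x, eval x (F i) ≠ 0 := by
  by_contra! h
  exact hdom (.of_degree_le_two (X_ne_zero i) one_le_two (isHomogeneous_X K i) fun x _ => by
    rw [eval_X, h])

theorem exists_eval_projectFrom_ne_zero (hdom : ¬MapsIntoConic F Set.univ) {x : σ → K}
    (hx : eval x (F 0) ≠ 0) : ∃ y, eval y (projectFrom F x 1) ≠ 0 := by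
  by_contra! h
  refine hdom (.of_degree_le_two (c := C (eval x (F 0)) * X 1 - C (eval x (F 1)) * X 0) ?_
    one_le_two ((isHomogeneous_C_mul_X _ _).sub (isHomogeneous_C_mul_X _ _)) fun y _ => ?_)
  · intro h₀
    have h₁ := congrArg (eval (Pi.single 1 1)) h₀
    simp [hx] at h₁
  · rw [← h y, eval_projectFrom]
    simp

theorem exists_projLine_forall_exists_eval_ne_zero [Infinite K]
    (hcop : ∀ D, (∀ i, D ∣ F i) → IsUnit D) (hdom : ¬MapsIntoConic F Set.univ) :
    ∃ x v : σ → K, ∀ y ∈ projLine x v, ∃ i, eval y (F i) ≠ 0 := by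
  obtain ⟨x, hx⟩ := exists_eval_coordinate_ne_zero hdom 0
  obtain ⟨v, -, hline⟩ := exists_line_forall_exists_eval_ne_zero hcop x one_ne_zero
  refine ⟨x, v, ?_⟩
  rintro _ (rfl | ⟨s, rfl⟩)
  exacts [⟨0, hx⟩, hline s]

theorem eval_bind₁ {ι : Type*} (F : ι → MvPolynomial σ K) (q : MvPolynomial ι K) (x : σ → K) :
    eval x (bind₁ F q) = eval (fun i => eval x (F i)) q := by
  simpa only [aeval_eq_eval] using aeval_bind₁ x F q

theorem exists_eval_ne_zero_and_coeff_one_restrictLine_projectFrom_ne_zero [CharZero K]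
    (hdom : ¬MapsIntoConic F Set.univ) {q : MvPolynomial (Fin 3) K} (hq₀ : q ≠ 0)
    (hq : q.IsHomogeneous 2) :
    ∃ x w, eval x (F 0) ≠ 0 ∧ eval (fun i => eval x (F i)) q ≠ 0 ∧
      (restrictLine x w (projectFrom F x 1)).coeff 1 ≠ 0 := by
  have hqF : bind₁ F q ≠ 0 := fun h => hdom ⟨q, hq₀, hq, fun y _ => by
    rw [← eval_bind₁, h, map_zero]⟩
  have hF₀ : F 0 ≠ 0 := fun h => by
    obtain ⟨x, hx⟩ := exists_eval_coordinate_ne_zero hdom 0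
    exact hx (by rw [h, map_zero])
  obtain ⟨x, hx⟩ := exists_eval_ne_zero (mul_ne_zero hF₀ hqF)
  obtain ⟨y, hy⟩ := exists_eval_projectFrom_ne_zero hdom (x := x) fun h => hx (by
    rw [map_mul, h, zero_mul])
  obtain ⟨p, w, hp, hw⟩ := exists_coeff_one_restrictLine_projectFrom_ne_zero hx hy
  rw [map_mul, mul_ne_zero_iff, eval_bind₁] at hp
  exact ⟨p, w, hp.1, hp.2, hw⟩

end Degree

theorem stmt_14_general {σ K : Type*} [Field K] [IsAlgClosed K] [CharZero K] {e : ℕ}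
    {F : Fin 3 → MvPolynomial σ K} (hhom : ∀ i, (F i).IsHomogeneous e)
    (hcop : ∀ D, (∀ i, D ∣ F i) → IsUnit D) (hdom : ¬MapsIntoConic F Set.univ)
    (hconic : ∀ x v, MapsIntoConic F (Submodule.span K {x, v} : Submodule K (σ → K))) : e ≤ 2 := by
  obtain _ | n := e
  · exact Nat.zero_le 2
  have hproj x v : MapsIntoConic F (projLine x v) := (hconic x v).mono (projLine_subset_span x v)
  obtain ⟨x₀, v₀, hbase⟩ := exists_projLine_forall_exists_eval_ne_zero hcop hdom
  obtain ⟨q, hq₀, hq, hqz⟩ := hproj x₀ v₀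
  obtain ⟨x, w, hx, hqx, hw⟩ :=
    exists_eval_ne_zero_and_coeff_one_restrictLine_projectFrom_ne_zero hdom hq₀ hq
  have hcop' := isUnit_of_forall_dvd_projectFrom hhom hbase hq hqz hx hqx
  obtain ⟨v, hv, hab⟩ := exists_direction_isCoprime_restrictLine_projectFrom hhom hw hcop'
  exact degree_le_two_of_isCoprime_restrictLine hhom hx hv hab (hproj x v)

/-- Let `f : ℂP² ⇢ ℂP²` be a dominant rational map given by three coprime
homogeneous polynomials of degree `e`, taking every line into a plane curve of
degree at most 2. Then `e ≤ 2`. -/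
theorem stmt_14 (e : ℕ) (F : Fin 3 → MvPolynomial (Fin 3) ℂ)
    (hhom : ∀ i, (F i).IsHomogeneous e)
    (hcop : ∀ D : MvPolynomial (Fin 3) ℂ,
      (∀ i, D ∣ F i) → IsUnit D)
    (hdom : ∀ g : MvPolynomial (Fin 3) ℂ, g ≠ 0 →
      (∃ dg : ℕ, 0 < dg ∧ g.IsHomogeneous dg) →
      ∃ x : Fin 3 → ℂ, MvPolynomial.eval (fun i => MvPolynomial.eval x (F i)) g ≠ 0)
    (hconic : ∀ ℓ : MvPolynomial (Fin 3) ℂ, ℓ ≠ 0 → ℓ.IsHomogeneous 1 →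
      ∃ c : MvPolynomial (Fin 3) ℂ, c ≠ 0 ∧
        (∃ dc : ℕ, 0 < dc ∧ dc ≤ 2 ∧ c.IsHomogeneous dc) ∧
        ∀ x : Fin 3 → ℂ, MvPolynomial.eval x ℓ = 0 →
          MvPolynomial.eval (fun i => MvPolynomial.eval x (F i)) c = 0) :
    e ≤ 2 := by
  refine stmt_14_general hhom hcop (fun ⟨q, hq₀, hq, hz⟩ => ?_)
    (mapsIntoConic_span_pair fun ℓ hℓ₀ hℓ => ?_)
  · obtain ⟨x, hx⟩ := hdom q hq₀ ⟨2, two_pos, hq⟩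
    exact hx (hz x trivial)
  · obtain ⟨c, hc₀, ⟨d, -, hd, hc⟩, hz⟩ := hconic ℓ hℓ₀ hℓ
    exact .of_degree_le_two hc₀ hd hc hz
end

section
/- Suppose Φ : ℂP² ⇢ S ⊂ ℂP³ is a rational map onto an irreducible surface S of degree at least 3, given by four homogeneous quadratic forms with no common factor, such that for a generic line L ⊂ ℂP², Φ(L) is an irreducible conic C whose plane P_L meets S in a curve strictly larger than C, and Φ⁻¹(P_L) is the union of L and a different line L'. If the restrictions of Φ to L and L' have degree one and Φ(L) ≠ Φ(L'), then Φ is birational onto S. -/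
/-!
Write `2 • Φ(x) = Q (x ⊙ x)`. If `Φ(x) = d² • Φ(y)`, then `(x + d y) ⊙ (x - d y)` lies in `ker Q`,
which is at most two-dimensional: the components of `Φ` are independent among the six monomials of
degree two. So if `Φ` is not generically injective, then `ker Q` is a pencil of symmetric matrices
with at least four singular members. Its determinant is a binary cubic form, hence vanishes
identically, and genericity leaves only the pencil `v ⊙ H` for a point `v` off a line `H`. Then `Φ`
is invariant under the reflection `σ` that fixes `H` and negates `v`. For a generic line `L` we
have `σ(L) ≠ L` and `σ(L) ⊆ Φ⁻¹(P_L) ⊆ L ∪ L'`, so `σ(L) ⊆ L'` and `Φ(L) = Φ(σ(L)) ⊆ Φ(L')`,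
against the choice of `L'`.
-/

open MvPolynomial Module
open scoped Matrix

section SymProd

variable {ι R : Type*} [CommRing R]

/-- The symmetric product `u ⊙ w = u ⊗ w + w ⊗ u`, as a vector indexed by unordered pairs of
coordinates. Without a factor `1 / 2` the square of `x` has diagonal entries `2 * x i * x i`. -/
def symProd : (ι → R) →ₗ[R] (ι → R) →ₗ[R] (Sym2 ι → R) :=
  LinearMap.mk₂ R
    (fun u w => Sym2.lift ⟨fun i j => u i * w j + u j * w i, fun _ _ => add_comm _ _⟩)
    (fun _ _ _ => funext <| Sym2.ind fun _ _ => by simp; ring)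
    (fun _ _ _ => funext <| Sym2.ind fun _ _ => by simp; ring)
    (fun _ _ _ => funext <| Sym2.ind fun _ _ => by simp; ring)
    (fun _ _ _ => funext <| Sym2.ind fun _ _ => by simp; ring)

theorem symProd_apply_mk (u w : ι → R) (i j : ι) :
    symProd u w s(i, j) = u i * w j + u j * w i :=
  rfl

theorem symProd_comm (u w : ι → R) : symProd u w = symProd w u :=
  funext <| Sym2.ind fun i j => by simp only [symProd_apply_mk]; ring

theorem symProd_add_sub (x y : ι → R) :
    symProd (x + y) (x - y) = symProd x x - symProd y y := by
  simp only [map_add, map_sub, LinearMap.add_apply, symProd_comm y x]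
  abel

/-- The symmetric matrix with the entries of `p` above and below the diagonal. -/
def symMatrix (p : Sym2 ι → R) : Matrix ι ι R :=
  Matrix.of fun i j => p s(i, j)

theorem symMatrix_symProd_mulVec [Fintype ι] (u w n : ι → R) :
    symMatrix (symProd u w) *ᵥ n = (n ⬝ᵥ w) • u + (n ⬝ᵥ u) • w := by
  ext i
  simp only [symMatrix, Matrix.mulVec, dotProduct, Matrix.of_apply, symProd_apply_mk, Pi.add_apply,
    Pi.smul_apply, smul_eq_mul, Finset.sum_mul, ← Finset.sum_add_distrib]
  exact Finset.sum_congr rfl fun j _ => by ring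

theorem symProd_ne_zero [Nontrivial R] {u w : ι → R} (h : LinearIndependent R ![u, w]) :
    symProd u w ≠ 0 := by
  intro h0
  refine h.ne_zero 1 (funext fun j => (LinearIndependent.pair_iff.mp h (w j) (u j) ?_).1)
  ext i
  have hij : u i * w j + u j * w i = 0 := congrFun h0 s(i, j)
  simpa [mul_comm (w j)] using hij

theorem dotProduct_eq_zero_of_symProd_eq_smul [Fintype ι] {u w u' w' n : ι → R} {a : R}
    (h' : LinearIndependent R ![u', w']) (hu : n ⬝ᵥ u = 0) (hw : n ⬝ᵥ w = 0)
    (h : symProd u' w' = a • symProd u w) : n ⬝ᵥ u' = 0 ∧ n ⬝ᵥ w' = 0 := by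
  refine (LinearIndependent.pair_iff.mp h' _ _ ?_).symm
  rw [← symMatrix_symProd_mulVec, h]
  change (a • symMatrix (symProd u w)) *ᵥ n = 0
  rw [Matrix.smul_mulVec, symMatrix_symProd_mulVec, hu, hw, zero_smul, zero_smul, add_zero,
    smul_zero]

theorem symProd_preReflection_sub_mem {N : Submodule R (Sym2 ι → R)} {v : ι → R}
    {f : Dual R (ι → R)} (hv : f v = 2) (hN : ∀ t, f t = 0 → symProd v t ∈ N) (x : ι → R) :
    symProd x x - symProd (preReflection v f x) (preReflection v f x) ∈ N := by
  have hfix : f (x + preReflection v f x) = 0 := by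
    rw [preReflection_apply, map_add, map_sub, map_smul, hv, smul_eq_mul]
    ring
  have hmove : x - preReflection v f x = f x • v := by
    rw [preReflection_apply, sub_sub_cancel]
  rw [← symProd_add_sub, symProd_comm, hmove, map_smul, LinearMap.smul_apply]
  exact N.smul_mem _ (hN _ hfix)

end SymProd

section Quadratic

variable {ι σ R : Type*} [CommRing R]

/-- The map `x ↦ (φ j (x))ⱼ` of affine cones over the rational map with components `φ j`. -/
noncomputable def evalVec (φ : ι → MvPolynomial σ R) (x : σ → R) : ι → R :=
  fun j => eval x (φ j)

theorem exists_eq_single_add_single_of_degree_eq_two {d : σ →₀ ℕ} (hd : d.degree = 2) :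
    ∃ i j, d = Finsupp.single i 1 + Finsupp.single j 1 := by
  classical
  obtain ⟨i, j, hij⟩ := Multiset.card_eq_two.mp ((Finsupp.card_toMultiset d).trans hd)
  refine ⟨i, j, ?_⟩
  rw [← Finsupp.toMultiset_toFinsupp d, hij, Multiset.insert_eq_cons, ← Multiset.singleton_add,
    map_add, Multiset.toFinsupp_singleton, Multiset.toFinsupp_singleton]

theorem exists_two_mul_eval_eq_dotProduct_symProd [Fintype σ] {p : MvPolynomial σ R}
    (hp : p.IsHomogeneous 2) : ∃ q : Sym2 σ → R, ∀ x, 2 * eval x p = q ⬝ᵥ symProd x x := by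
  classical
  rw [p.as_sum]
  refine Finset.sum_induction _
    (fun p => ∃ q : Sym2 σ → R, ∀ x, 2 * eval x p = q ⬝ᵥ symProd x x) ?_ ⟨0, by simp⟩ ?_
  · rintro _ _ ⟨q, hq⟩ ⟨r, hr⟩
    exact ⟨q + r, fun x => by rw [map_add, mul_add, hq, hr, add_dotProduct]⟩
  · intro d hd
    have hdeg : d.degree = 2 := by
      rw [Finsupp.degree_eq_weight_one]
      exact hp (mem_support_iff.mp hd)
    obtain ⟨i, j, hij⟩ := exists_eq_single_add_single_of_degree_eq_two hdeg
    refine ⟨Pi.single s(i, j) (coeff d p), fun x => ?_⟩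
    have hmon : d.prod (fun k e => x k ^ e) = x i * x j := by
      simp [hij, Finsupp.prod_add_index', pow_add]
    rw [single_dotProduct, symProd_apply_mk, eval_monomial, hmon]
    ring

theorem exists_two_smul_evalVec_eq_mulVec_symProd [Fintype σ] {φ : ι → MvPolynomial σ R}
    (hφ : ∀ i, (φ i).IsHomogeneous 2) :
    ∃ Q : Matrix ι (Sym2 σ) R, ∀ x, (2 : R) • evalVec φ x = Q *ᵥ symProd x x := by
  choose Q hQ using fun i => exists_two_mul_eval_eq_dotProduct_symProd (hφ i)
  exact ⟨Q, fun x => funext fun i => hQ i x⟩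

end Quadratic

section Pencil

variable {R : Type*} [CommRing R]

theorem det_symMatrix_symProd (u w : Fin 3 → R) : (symMatrix (symProd u w)).det = 0 := by
  simp only [symMatrix, Matrix.det_fin_three, Matrix.of_apply, symProd_apply_mk]
  ring

theorem det_symMatrix_smul_add_smul (a b : R) (u w u' w' : Fin 3 → R) :
    (symMatrix (a • symProd u w + b • symProd u' w')).det =
      -2 * a * b * (a * ((u ⨯₃ w ⬝ᵥ u') * (u ⨯₃ w ⬝ᵥ w')) +
        b * ((u' ⨯₃ w' ⬝ᵥ u) * (u' ⨯₃ w' ⬝ᵥ w))) := by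
  simp only [symMatrix, Matrix.det_fin_three, Matrix.of_apply, Pi.add_apply, Pi.smul_apply,
    symProd_apply_mk, smul_eq_mul, cross_apply, Matrix.vec3_dotProduct, Matrix.cons_val]
  ring

theorem cross_dotProduct_smul_eq (x u v w : Fin 3 → R) :
    (u ⨯₃ v ⬝ᵥ w) • x = (v ⨯₃ w ⬝ᵥ x) • u + (w ⨯₃ u ⬝ᵥ x) • v + (u ⨯₃ v ⬝ᵥ x) • w := by
  ext i
  simp only [cross_apply, Matrix.vec3_dotProduct, Matrix.cons_val, Pi.add_apply, Pi.smul_apply,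
    smul_eq_mul]
  fin_cases i <;> simp only [Fin.zero_eta, Fin.mk_one, Fin.reduceFinMk] <;> ring

end Pencil

section Generic

theorem exists_eval_ne_zero_s16 {σ R : Type*} [CommRing R] [IsDomain R] [Infinite R]
    {p : MvPolynomial σ R} (hp : p ≠ 0) : ∃ x, eval x p ≠ 0 := by
  by_contra! h
  exact hp (funext fun x => by rw [h, map_zero])

theorem exists_ne_zero_forall_dotProduct_ne_zero {σ R : Type*} [Fintype σ] [CommRing R]
    [IsDomain R] {s : Finset (σ → R)} (hs : 0 ∉ s) :
    ∃ h : MvPolynomial σ R, h ≠ 0 ∧ ∀ x, eval x h ≠ 0 → ∀ n ∈ s, n ⬝ᵥ x ≠ 0 := by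
  classical
  have heval (n x : σ → R) : eval x (∑ i, C (n i) * X i) = n ⬝ᵥ x := by
    simp [dotProduct]
  refine ⟨∏ n ∈ s, ∑ i, C (n i) * X i, Finset.prod_ne_zero_iff.mpr fun n hn h0 => ?_, ?_⟩
  · refine hs (dotProduct_eq_zero n (fun x => ?_) ▸ hn)
    rw [← heval, h0, map_zero]
  · intro x hx n hn
    rw [map_prod, Finset.prod_ne_zero_iff] at hx
    exact heval n x ▸ hx n hn

theorem exists_eval_ne_zero_and_forall_dotProduct_ne_zero {σ R : Type*} [Fintype σ] [CommRing R]
    [IsDomain R] [Infinite R] {p : MvPolynomial σ R} (hp : p ≠ 0) {s : Finset (σ → R)}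
    (hs : 0 ∉ s) : ∃ x, eval x p ≠ 0 ∧ ∀ n ∈ s, n ⬝ᵥ x ≠ 0 := by
  obtain ⟨h, hh, hhs⟩ := exists_ne_zero_forall_dotProduct_ne_zero hs
  obtain ⟨x, hx⟩ := exists_eval_ne_zero_s16 (mul_ne_zero hp hh)
  rw [map_mul] at hx
  exact ⟨x, left_ne_zero_of_mul hx, hhs x (right_ne_zero_of_mul hx)⟩

end Generic

section Field

variable {K : Type*} [Field K]

theorem linearIndependent_symProd_pair {u w u' w' : Fin 3 → K} (h : LinearIndependent K ![u, w])
    (h' : LinearIndependent K ![u', w']) (hn : u ⨯₃ w ⬝ᵥ (u' + w') ≠ 0) :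
    LinearIndependent K ![symProd u w, symProd u' w'] := by
  refine (LinearIndependent.pair_iff' (symProd_ne_zero h)).mpr fun a ha => hn ?_
  have hu : u ⨯₃ w ⬝ᵥ u = 0 := by rw [dotProduct_comm, dot_self_cross]
  have hw : u ⨯₃ w ⬝ᵥ w = 0 := by rw [dotProduct_comm, dot_cross_self]
  obtain ⟨hu', hw'⟩ := dotProduct_eq_zero_of_symProd_eq_smul h' hu hw ha.symm
  rw [dotProduct_add, hu', hw', add_zero]

theorem exists_ne_zero_eq_smul_add_smul {V : Type*} [AddCommGroup V] [Module K V]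
    {N : Submodule K V} [FiniteDimensional K N] (hN : finrank K N ≤ 2) {p₁ p₂ p : V} (hp₁ : p₁ ∈ N)
    (hp₂ : p₂ ∈ N) (hp : p ∈ N) (h₁₂ : LinearIndependent K ![p₁, p₂])
    (h₁ : LinearIndependent K ![p₁, p]) (h₂ : LinearIndependent K ![p₂, p]) :
    ∃ a b : K, a ≠ 0 ∧ b ≠ 0 ∧ p = a • p₁ + b • p₂ := by
  have hspan : Submodule.span K {p₁, p₂} = N := by
    refine Submodule.eq_of_le_of_finrank_le
      (Submodule.span_le.mpr (Set.pair_subset hp₁ hp₂)) (hN.trans_eq ?_)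
    rw [← Matrix.range_cons_cons_empty p₁ p₂ ![], finrank_span_eq_card h₁₂, Fintype.card_fin]
  obtain ⟨a, b, rfl⟩ := Submodule.mem_span_pair.mp (hspan ▸ hp)
  refine ⟨a, b, ?_, ?_, rfl⟩
  · rintro rfl
    exact (LinearIndependent.pair_iff' (h₂.ne_zero 0)).mp h₂ b (by simp)
  · rintro rfl
    exact (LinearIndependent.pair_iff' (h₁.ne_zero 0)).mp h₁ a (by simp)

theorem add_eq_zero_of_symProd_eq_smul_add_smul [NeZero (2 : K)] {a b : K} (ha : a ≠ 0)
    (hb : b ≠ 0) {u w u₁ w₁ u₂ w₂ : Fin 3 → K}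
    (h : symProd u w = a • symProd u₁ w₁ + b • symProd u₂ w₂) :
    a * ((u₁ ⨯₃ w₁ ⬝ᵥ u₂) * (u₁ ⨯₃ w₁ ⬝ᵥ w₂)) + b * ((u₂ ⨯₃ w₂ ⬝ᵥ u₁) * (u₂ ⨯₃ w₂ ⬝ᵥ w₁)) = 0 := by
  have hdet := det_symMatrix_symProd u w
  rw [h, det_symMatrix_smul_add_smul] at hdet
  simpa [ha, hb, NeZero.ne (2 : K)] using hdet

/-- The products `u ⊙ w ∈ N` of two independent vectors are plentiful: the sums `u + w` leave any
given finite union of hyperplanes `n ⬝ᵥ x = 0`. -/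
def HasGenericProducts {ι : Type*} [Fintype ι] (N : Submodule K (Sym2 ι → K)) : Prop :=
  ∀ s : Finset (ι → K), 0 ∉ s → ∃ u w, LinearIndependent K ![u, w] ∧ symProd u w ∈ N ∧
    ∀ n ∈ s, n ⬝ᵥ (u + w) ≠ 0

theorem HasGenericProducts.exists_dotProduct_mul_dotProduct_eq_zero [NeZero (2 : K)]
    {N : Submodule K (Sym2 (Fin 3) → K)} (hN : HasGenericProducts N) (hdim : finrank K N ≤ 2) :
    ∃ u w u' w' : Fin 3 → K, u' ≠ 0 ∧ w' ≠ 0 ∧ symProd u w ∈ N ∧ symProd u' w' ∈ N ∧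
      u ⨯₃ w ⬝ᵥ (u' + w') ≠ 0 ∧ (u ⨯₃ w ⬝ᵥ u') * (u ⨯₃ w ⬝ᵥ w') = 0 ∧
      (u' ⨯₃ w' ⬝ᵥ u) * (u' ⨯₃ w' ⬝ᵥ w) = 0 := by
  classical
  obtain ⟨u₁, w₁, h₁, hN₁, -⟩ := hN ∅ (by simp)
  have hn₁ := (crossProduct_ne_zero_iff_linearIndependent.mpr h₁).symm
  obtain ⟨u₂, w₂, h₂, hN₂, hs₂⟩ := hN {u₁ ⨯₃ w₁} (by simpa using hn₁)
  have hn₂ := (crossProduct_ne_zero_iff_linearIndependent.mpr h₂).symm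
  obtain ⟨u₃, w₃, h₃, hN₃, hs₃⟩ := hN {u₁ ⨯₃ w₁, u₂ ⨯₃ w₂} (by simp [hn₁, hn₂])
  have hn₃ := (crossProduct_ne_zero_iff_linearIndependent.mpr h₃).symm
  obtain ⟨u₄, w₄, h₄, hN₄, hs₄⟩ := hN {u₁ ⨯₃ w₁, u₂ ⨯₃ w₂, u₃ ⨯₃ w₃} (by simp [hn₁, hn₂, hn₃])
  simp only [Finset.mem_insert, Finset.mem_singleton, forall_eq_or_imp, forall_eq] at hs₂ hs₃ hs₄
  have h₁₂ := linearIndependent_symProd_pair h₁ h₂ hs₂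
  obtain ⟨a, b, ha, hb, hab⟩ := exists_ne_zero_eq_smul_add_smul hdim hN₁ hN₂ hN₃ h₁₂
    (linearIndependent_symProd_pair h₁ h₃ hs₃.1) (linearIndependent_symProd_pair h₂ h₃ hs₃.2)
  obtain ⟨a', b', ha', hb', hab'⟩ := exists_ne_zero_eq_smul_add_smul hdim hN₁ hN₂ hN₄ h₁₂
    (linearIndependent_symProd_pair h₁ h₄ hs₄.1) (linearIndependent_symProd_pair h₂ h₄ hs₄.2.1)
  have hdet : a * b' - b * a' ≠ 0 := by
    have h₃₄ := linearIndependent_symProd_pair h₃ h₄ hs₄.2.2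
    rw [hab, hab', LinearIndependent.pair_add_smul_add_smul_iff] at h₃₄
    exact sub_ne_zero.mpr h₃₄.2
  have hc := add_eq_zero_of_symProd_eq_smul_add_smul ha hb hab
  have hc' := add_eq_zero_of_symProd_eq_smul_add_smul ha' hb' hab'
  refine ⟨u₁, w₁, u₂, w₂, h₂.ne_zero 0, h₂.ne_zero 1, hN₁, hN₂, hs₂,
    (mul_eq_zero_iff_left hdet).mp ?_, (mul_eq_zero_iff_left hdet).mp ?_⟩
  · linear_combination b' * hc - b * hc'
  · linear_combination a * hc' - a' * hc

theorem exists_symProd_mem_of_dotProduct_eq_zero {N : Submodule K (Sym2 (Fin 3) → K)}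
    {u w u' w' : Fin 3 → K} (hN : symProd u w ∈ N) (hN' : symProd u' w' ∈ N) (hu'₀ : u' ≠ 0)
    (hn : u ⨯₃ w ⬝ᵥ (u' + w') ≠ 0) (hu' : u ⨯₃ w ⬝ᵥ u' = 0) (hu : u' ⨯₃ w' ⬝ᵥ u = 0) :
    ∃ v n : Fin 3 → K, n ⬝ᵥ v ≠ 0 ∧ ∀ t, n ⬝ᵥ t = 0 → symProd v t ∈ N := by
  rw [dotProduct_add, hu', zero_add] at hn
  have hu'' : w' ⨯₃ u ⬝ᵥ u' = 0 := by
    rw [dotProduct_comm, triple_product_permutation, triple_product_permutation, dotProduct_comm,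
      hu]
  have hparallel : (u ⨯₃ w ⬝ᵥ w') • u' = (w ⨯₃ w' ⬝ᵥ u') • u := by
    rw [cross_dotProduct_smul_eq, hu', hu'', zero_smul, zero_smul, add_zero, add_zero]
  have hscale : w ⨯₃ w' ⬝ᵥ u' ≠ 0 := by
    intro h
    rw [h, zero_smul] at hparallel
    exact smul_ne_zero hn hu'₀ hparallel
  have huw' : symProd u w' ∈ N := by
    rw [← N.smul_mem_iff hscale, ← LinearMap.smul_apply, ← map_smul, ← hparallel, map_smul]
    exact N.smul_mem _ hN'
  refine ⟨u, w ⨯₃ w', ?_, fun t ht => ?_⟩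
  · rwa [dotProduct_comm, triple_product_permutation, triple_product_permutation, dotProduct_comm]
  · rw [← N.smul_mem_iff hn, ← map_smul, cross_dotProduct_smul_eq, ht, zero_smul, zero_add,
      map_add, map_smul, map_smul]
    exact N.add_mem (N.smul_mem _ hN) (N.smul_mem _ huw')

theorem HasGenericProducts.exists_symProd_mem [NeZero (2 : K)]
    {N : Submodule K (Sym2 (Fin 3) → K)} (hN : HasGenericProducts N) (hdim : finrank K N ≤ 2) :
    ∃ v n : Fin 3 → K, n ⬝ᵥ v ≠ 0 ∧ ∀ t, n ⬝ᵥ t = 0 → symProd v t ∈ N := by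
  obtain ⟨u, w, u', w', hu'₀, hw'₀, hp, hp', hn, h, h'⟩ :=
    hN.exists_dotProduct_mul_dotProduct_eq_zero hdim
  wlog hu' : u ⨯₃ w ⬝ᵥ u' = 0 generalizing u' w'
  · have hw' := (mul_eq_zero_iff_left hu').mp h
    refine this w' u' hw'₀ hu'₀ (symProd_comm u' w' ▸ hp') (add_comm u' w' ▸ hn)
      (mul_comm (_ : K) _ ▸ h) ?_ hw'
    rwa [← cross_anticomm, neg_dotProduct, neg_dotProduct, neg_mul_neg]
  wlog hu : u' ⨯₃ w' ⬝ᵥ u = 0 generalizing u w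
  · have hw := (mul_eq_zero_iff_left hu).mp h'
    refine this w u (symProd_comm u w ▸ hp) ?_ ?_ (mul_comm (_ : K) _ ▸ h') ?_ hw
    · rwa [← cross_anticomm, neg_dotProduct, neg_ne_zero]
    · rwa [← cross_anticomm, neg_dotProduct, neg_dotProduct, neg_mul_neg]
    · rw [← cross_anticomm, neg_dotProduct, hu', neg_zero]
  exact exists_symProd_mem_of_dotProduct_eq_zero hp hp' hu'₀ hn hu' hu

theorem finrank_ker_mulVecLin_add_card {m n : Type*} [Fintype m] [Fintype n] {A : Matrix m n K}
    (hA : LinearIndependent K A.row) :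
    finrank K (LinearMap.ker A.mulVecLin) + Fintype.card m = Fintype.card n := by
  have h := LinearMap.finrank_range_add_finrank_ker A.mulVecLin
  rw [← Matrix.rank, hA.rank_matrix, Module.finrank_fintype_fun_eq_card] at h
  rw [add_comm, h]

theorem apply_eq_zero_of_forall_eq_zero_or {V : Type*} [AddCommGroup V] [Module K V]
    {f g h : Dual K V} (hgh : ∀ x, f x = 0 → g x = 0 ∨ h x = 0)
    (hg : ∃ x, f x = 0 ∧ g x ≠ 0) {x : V} (hx : f x = 0) : h x = 0 := by
  have hker : (LinearMap.ker f : Set V) ⊆ LinearMap.ker g ∪ LinearMap.ker h := hgh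
  obtain ⟨y, hfy, hgy⟩ := hg
  rcases AddSubgroupClass.subset_union.mp hker with hfg | hfh
  · exact absurd (hfg hfy) hgy
  · exact hfh hx

/-- The vectors `a` and `b` represent the same point of projective space, or both vanish. -/
def ProjEq {ι : Type*} (a b : ι → K) : Prop :=
  ∃ c : K, c ≠ 0 ∧ a = c • b

/-- The rational map of projective spaces with components `φ j` is injective on a nonempty Zariski
open set. -/
def GenericallyInjective {ι σ : Type*} (φ : ι → MvPolynomial σ K) : Prop :=
  ∃ h : MvPolynomial σ K, h ≠ 0 ∧ ∀ x y, eval x h ≠ 0 → eval y h ≠ 0 →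
    ProjEq (evalVec φ x) (evalVec φ y) → ProjEq x y

theorem linearIndependent_pair_of_not_projEq {ι : Type*} {x y : ι → K} (hx : x ≠ 0) (hy : y ≠ 0)
    (h : ¬ ProjEq x y) : LinearIndependent K ![x, y] := by
  refine (LinearIndependent.pair_iff' hx).mpr fun a hxy => ?_
  have ha : a ≠ 0 := by
    rintro rfl
    exact hy (by rw [← hxy, zero_smul])
  exact h ⟨a⁻¹, inv_ne_zero ha, by rw [← hxy, inv_smul_smul₀ ha]⟩

variable {ι σ : Type*} [Fintype σ] {φ : ι → MvPolynomial σ K}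

theorem linearIndependent_row_of_two_smul_evalVec_eq_mulVec [Finite ι] [NeZero (2 : K)]
    [Infinite K] (hφ : LinearIndependent K φ) {Q : Matrix ι (Sym2 σ) K}
    (hQ : ∀ x, (2 : K) • evalVec φ x = Q *ᵥ symProd x x) : LinearIndependent K Q.row := by
  cases nonempty_fintype ι
  rw [Fintype.linearIndependent_iff] at hφ ⊢
  intro c hc
  refine hφ c (funext fun x => (mul_eq_zero_iff_left (NeZero.ne (2 : K))).mp ?_)
  have hcQ : c ᵥ* Q = 0 := by rw [Matrix.vecMul_eq_sum]; exact hc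
  calc 2 * eval x (∑ i, c i • φ i) = c ⬝ᵥ (2 : K) • evalVec φ x := by
        simp [dotProduct, evalVec, Finset.mul_sum, mul_left_comm]
    _ = 0 := by rw [hQ, Matrix.dotProduct_mulVec, hcQ, zero_dotProduct]

theorem hasGenericProducts_ker_of_not_genericallyInjective [IsAlgClosed K] [NeZero (2 : K)]
    [Nonempty σ] {Q : Matrix ι (Sym2 σ) K}
    (hQ : ∀ x, (2 : K) • evalVec φ x = Q *ᵥ symProd x x) (hφ : ¬ GenericallyInjective φ) :
    HasGenericProducts (LinearMap.ker Q.mulVecLin) := by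
  classical
  intro s hs
  obtain ⟨h, hh, hhs⟩ := exists_ne_zero_forall_dotProduct_ne_zero (s := insert 1 s) (by simp [hs])
  simp only [GenericallyInjective] at hφ
  push Not at hφ
  obtain ⟨x, y, hx, hy, ⟨c, hc, hxy⟩, hne⟩ := hφ h hh
  obtain ⟨d, rfl⟩ := IsAlgClosed.exists_eq_mul_self c
  have hne_zero {z : σ → K} (hz : eval z h ≠ 0) : z ≠ 0 := by
    rintro rfl
    exact hhs 0 hz 1 (Finset.mem_insert_self 1 s) (dotProduct_zero 1)
  have hind : LinearIndependent K ![(1 : K) • x + d • y, (1 : K) • x + -d • y] := by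
    refine (LinearIndependent.pair_add_smul_add_smul_iff ..).mpr
      ⟨linearIndependent_pair_of_not_projEq (hne_zero hx) (hne_zero hy) hne, ?_⟩
    intro hd
    have h2d : 2 * d = 0 := by linear_combination -hd
    exact hc (by rw [(mul_eq_zero_iff_left two_ne_zero).mp h2d, zero_mul])
  refine ⟨x + d • y, x - d • y, by simpa [sub_eq_add_neg] using hind, ?_, fun n hn => ?_⟩
  · rw [LinearMap.mem_ker, Matrix.mulVecLin_apply, symProd_add_sub, Matrix.mulVec_sub, map_smul,
      map_smul, LinearMap.smul_apply, smul_smul, Matrix.mulVec_smul, ← hQ, ← hQ, hxy, smul_comm,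
      sub_self]
  · rw [add_add_sub_cancel, ← two_smul K x, dotProduct_smul, smul_eq_mul]
    exact mul_ne_zero two_ne_zero (hhs x hx n (Finset.mem_insert_of_mem hn))

theorem evalVec_preReflection [NeZero (2 : K)] {Q : Matrix ι (Sym2 σ) K}
    (hQ : ∀ x, (2 : K) • evalVec φ x = Q *ᵥ symProd x x) {v : σ → K} {f : Dual K (σ → K)}
    (hv : f v = 2) (hQv : ∀ t, f t = 0 → symProd v t ∈ LinearMap.ker Q.mulVecLin) (x : σ → K) :
    evalVec φ (preReflection v f x) = evalVec φ x := by
  have hx := symProd_preReflection_sub_mem hv hQv x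
  rw [LinearMap.mem_ker, map_sub, sub_eq_zero, Matrix.mulVecLin_apply, Matrix.mulVecLin_apply,
    ← hQ, ← hQ] at hx
  exact (smul_right_injective _ (NeZero.ne (2 : K)) hx).symm

theorem exists_preReflection_evalVec_eq [IsAlgClosed K] [NeZero (2 : K)] [Fintype ι]
    {φ : ι → MvPolynomial (Fin 3) K} (hhom : ∀ i, (φ i).IsHomogeneous 2)
    (hφ : LinearIndependent K φ) (hι : 4 ≤ Fintype.card ι) (hinj : ¬ GenericallyInjective φ) :
    ∃ (v : Fin 3 → K) (f : Dual K (Fin 3 → K)), f v = 2 ∧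
      ∀ x, evalVec φ (preReflection v f x) = evalVec φ x := by
  have : Infinite K := IsAlgClosed.instInfinite
  obtain ⟨Q, hQ⟩ := exists_two_smul_evalVec_eq_mulVec_symProd hhom
  have hdim : finrank K (LinearMap.ker Q.mulVecLin) ≤ 2 := by
    have hcard :=
      finrank_ker_mulVecLin_add_card (linearIndependent_row_of_two_smul_evalVec_eq_mulVec hφ hQ)
    have hsix : Fintype.card (Sym2 (Fin 3)) = 6 := by simp [Sym2.card, Nat.choose]
    lia
  obtain ⟨v, n, hnv, hv⟩ :=
    (hasGenericProducts_ker_of_not_genericallyInjective hQ hinj).exists_symProd_mem hdim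
  have hfv : ((2 / (n ⬝ᵥ v)) • dotProductEquiv K (Fin 3) n) v = 2 := div_mul_cancel₀ 2 hnv
  refine ⟨v, (2 / (n ⬝ᵥ v)) • dotProductEquiv K (Fin 3) n, hfv, evalVec_preReflection hQ hfv
    fun t ht => hv t ?_⟩
  exact (mul_eq_zero_iff_left (div_ne_zero two_ne_zero hnv)).mp ht

theorem exists_dotProduct_preReflection_ne_zero [Infinite K] [NeZero (2 : K)] [Nontrivial σ]
    {g : MvPolynomial σ K} (hg : g ≠ 0) {v : σ → K} {f : Dual K (σ → K)} (hv : f v = 2) :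
    ∃ ℓ : σ → K, ℓ ≠ 0 ∧ eval ℓ g ≠ 0 ∧ ∃ x, ℓ ⬝ᵥ x = 0 ∧ ℓ ⬝ᵥ preReflection v f x ≠ 0 := by
  classical
  have hv0 : v ≠ 0 := by
    rintro rfl
    exact two_ne_zero (hv.symm.trans (map_zero f))
  obtain ⟨t, ht, ht0⟩ : ∃ t, f t = 0 ∧ t ≠ 0 := by
    have hker : LinearMap.ker f ≠ ⊥ := LinearMap.ker_ne_bot_of_finrank_lt (by
      simpa using Fintype.one_lt_card)
    simpa using Submodule.exists_mem_ne_zero_of_ne_bot hker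
  obtain ⟨ℓ, hgℓ, hℓ⟩ := exists_eval_ne_zero_and_forall_dotProduct_ne_zero hg (s := {v, t})
    (by simp [hv0.symm, ht0.symm])
  have hℓv : ℓ ⬝ᵥ v ≠ 0 := dotProduct_comm v ℓ ▸ hℓ v (by simp)
  have hℓt : ℓ ⬝ᵥ t ≠ 0 := dotProduct_comm t ℓ ▸ hℓ t (by simp)
  have hx : ℓ ⬝ᵥ ((ℓ ⬝ᵥ v) • t - (ℓ ⬝ᵥ t) • v) = 0 := by
    simp only [dotProduct_sub, dotProduct_smul, smul_eq_mul]
    ring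
  refine ⟨ℓ, ?_, hgℓ, _, hx, ?_⟩
  · rintro rfl
    exact hℓv (zero_dotProduct v)
  · rw [preReflection_apply, dotProduct_sub, hx, map_sub, map_smul, map_smul, ht, hv,
      dotProduct_smul]
    simp [hℓv, hℓt, two_ne_zero]

theorem linearIndependent_of_unique_hyperplane [Infinite K] [Fintype ι] {ℓ ℓ' : σ → K}
    (hℓ : ℓ ≠ 0) (hℓ' : ℓ' ≠ 0) {m : ι → K}
    (huniq : ∀ m' : ι → K, m' ≠ 0 → (∀ x, ℓ ⬝ᵥ x = 0 → m' ⬝ᵥ evalVec φ x = 0) →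
      ∃ c : K, m' = c • m)
    (hpre : ∀ x, m ⬝ᵥ evalVec φ x = 0 → ℓ ⬝ᵥ x = 0 ∨ ℓ' ⬝ᵥ x = 0) :
    LinearIndependent K φ := by
  classical
  obtain ⟨x, -, hx⟩ := exists_eval_ne_zero_and_forall_dotProduct_ne_zero
    (one_ne_zero : (1 : MvPolynomial σ K) ≠ 0) (s := {ℓ, ℓ'}) (by simp [hℓ.symm, hℓ'.symm])
  refine Fintype.linearIndependent_iff.mpr fun m' hm' => congrFun ?_
  by_contra hne
  have hvanish (y : σ → K) : m' ⬝ᵥ evalVec φ y = 0 := by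
    simpa [dotProduct, evalVec] using congrArg (eval y) hm'
  obtain ⟨c, rfl⟩ := huniq m' hne fun y _ => hvanish y
  have hmx : m ⬝ᵥ evalVec φ x = 0 := by
    simpa [(smul_ne_zero_iff.mp hne).1] using hvanish x
  exact (hpre x hmx).elim (hx ℓ (by simp)) (hx ℓ' (by simp))

end Field

theorem stmt_16_general {K : Type*} [Field K] [IsAlgClosed K] [NeZero (2 : K)] {ι : Type*}
    [Fintype ι] (φ : ι → MvPolynomial (Fin 3) K) (hhom : ∀ i, (φ i).IsHomogeneous 2)
    (hφ : LinearIndependent K φ) (hι : 4 ≤ Fintype.card ι) (g : MvPolynomial (Fin 3) K) (hg : g ≠ 0)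
    (hgen : ∀ ℓ : Fin 3 → K, ℓ ≠ 0 → eval ℓ g ≠ 0 → ∃ (m : ι → K) (ℓ' : Fin 3 → K),
      (∀ x, ℓ ⬝ᵥ x = 0 → m ⬝ᵥ evalVec φ x = 0) ∧
      (∀ x, m ⬝ᵥ evalVec φ x = 0 → ℓ ⬝ᵥ x = 0 ∨ ℓ' ⬝ᵥ x = 0) ∧
      ∃ x, ℓ ⬝ᵥ x = 0 ∧ ∀ y, ℓ' ⬝ᵥ y = 0 → ¬ ProjEq (evalVec φ x) (evalVec φ y)) :
    GenericallyInjective φ := by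
  by_contra hinj
  have : Infinite K := IsAlgClosed.instInfinite
  obtain ⟨v, f, hv, hinv⟩ := exists_preReflection_evalVec_eq hhom hφ hι hinj
  obtain ⟨ℓ, hℓ, hgℓ, hmove⟩ := exists_dotProduct_preReflection_ne_zero hg hv
  obtain ⟨m, ℓ', hmL, hpre, x, hxL, hx⟩ := hgen ℓ hℓ hgℓ
  have hswap : ∀ y, ℓ ⬝ᵥ y = 0 → ℓ' ⬝ᵥ preReflection v f y = 0 := fun y =>
    apply_eq_zero_of_forall_eq_zero_or (f := dotProductEquiv K _ ℓ)
      (g := dotProductEquiv K _ ℓ ∘ₗ preReflection v f)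
      (h := dotProductEquiv K _ ℓ' ∘ₗ preReflection v f)
      (fun z hz => hpre _ (by rw [hinv]; exact hmL z hz)) hmove
  exact hx (preReflection v f x) (hswap x hxL) ⟨1, one_ne_zero, by rw [hinv, one_smul]⟩

/-- Lemma "Phi-birat": let `Φ : ℂP² ⇢ ℂP³` be given by four quadratic forms
`φ₀,…,φ₃` with no common factor, and let `S` be an irreducible surface of
degree at least 3 (cut out by an irreducible homogeneous `s`) containing the
image. Suppose that for every line `L = {ℓ·x = 0}` in a nonempty Zariski open
set of lines, the image `Φ(L)` spans a unique plane `P_L = {m·z = 0}` (so the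
conic `Φ(L)` is irreducible), `P_L ∩ S` is strictly larger than `Φ(L)`, the
`Φ`-preimage of `P_L` is contained in the union of `L` and a different line
`L'`, the restrictions of `Φ` to `L` and `L'` are generically injective (degree
one), and `Φ(L) ≠ Φ(L')`. Then `Φ` is birational onto `S`, i.e. generically
injective (up to scalars). -/
theorem stmt_16 (φ : Fin 4 → MvPolynomial (Fin 3) ℂ)
    (hhom : ∀ i, (φ i).IsHomogeneous 2)
    (hcop : ∀ D : MvPolynomial (Fin 3) ℂ, (∀ i, D ∣ φ i) → IsUnit D)
    (s : MvPolynomial (Fin 4) ℂ) (ds : ℕ)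
    (hirr : Irreducible s) (hs : s.IsHomogeneous ds) (hds : 3 ≤ ds)
    (hS : ∀ x : Fin 3 → ℂ,
      MvPolynomial.eval (fun i => MvPolynomial.eval x (φ i)) s = 0)
    (g : MvPolynomial (Fin 3) ℂ) (hg : g ≠ 0)
    (hgen : ∀ ℓ : Fin 3 → ℂ, ℓ ≠ 0 → MvPolynomial.eval ℓ g ≠ 0 →
      ∃ (m : Fin 4 → ℂ) (ℓ' : Fin 3 → ℂ),
        m ≠ 0 ∧
        -- the plane P_L contains Φ(L)
        (∀ x : Fin 3 → ℂ, (∑ i, ℓ i * x i) = 0 →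
          ∑ j, m j * MvPolynomial.eval x (φ j) = 0) ∧
        -- the plane of Φ(L) is unique (Φ(L) is an irreducible conic)
        (∀ m' : Fin 4 → ℂ, m' ≠ 0 →
          (∀ x : Fin 3 → ℂ, (∑ i, ℓ i * x i) = 0 →
            ∑ j, m' j * MvPolynomial.eval x (φ j) = 0) →
          ∃ c : ℂ, m' = c • m) ∧
        -- P_L ∩ S is strictly bigger than the conic Φ(L)
        (∃ z : Fin 4 → ℂ, z ≠ 0 ∧ MvPolynomial.eval z s = 0 ∧
          (∑ j, m j * z j) = 0 ∧
          ¬∃ x : Fin 3 → ℂ, (∑ i, ℓ i * x i) = 0 ∧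
            ∃ c : ℂ, c ≠ 0 ∧ z = c • fun j => MvPolynomial.eval x (φ j)) ∧
        -- L' is a line different from L
        ℓ' ≠ 0 ∧ (¬∃ c : ℂ, ℓ' = c • ℓ) ∧
        -- Φ⁻¹(P_L) ⊆ L ∪ L'
        (∀ x : Fin 3 → ℂ, (∑ j, m j * MvPolynomial.eval x (φ j)) = 0 →
          (∑ i, ℓ i * x i) = 0 ∨ (∑ i, ℓ' i * x i) = 0) ∧
        -- Φ restricted to L has degree one
        (∀ x y : Fin 3 → ℂ, x ≠ 0 → y ≠ 0 →
          (∑ i, ℓ i * x i) = 0 → (∑ i, ℓ i * y i) = 0 →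
          (∃ c : ℂ, c ≠ 0 ∧
            (fun j => MvPolynomial.eval x (φ j)) =
              c • fun j => MvPolynomial.eval y (φ j)) →
          ∃ c' : ℂ, c' ≠ 0 ∧ x = c' • y) ∧
        -- Φ restricted to L' has degree one
        (∀ x y : Fin 3 → ℂ, x ≠ 0 → y ≠ 0 →
          (∑ i, ℓ' i * x i) = 0 → (∑ i, ℓ' i * y i) = 0 →
          (∃ c : ℂ, c ≠ 0 ∧
            (fun j => MvPolynomial.eval x (φ j)) =
              c • fun j => MvPolynomial.eval y (φ j)) →
          ∃ c' : ℂ, c' ≠ 0 ∧ x = c' • y) ∧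
        -- Φ(L) ≠ Φ(L')
        (∃ x : Fin 3 → ℂ, x ≠ 0 ∧ (∑ i, ℓ i * x i) = 0 ∧
          ∀ y : Fin 3 → ℂ, (∑ i, ℓ' i * y i) = 0 →
            ¬∃ c : ℂ, c ≠ 0 ∧
              (fun j => MvPolynomial.eval x (φ j)) =
                c • fun j => MvPolynomial.eval y (φ j))) :
    -- Φ is birational onto S: generically injective up to scalars
    ∃ h : MvPolynomial (Fin 3) ℂ, h ≠ 0 ∧
      ∀ x y : Fin 3 → ℂ,
        MvPolynomial.eval x h ≠ 0 → MvPolynomial.eval y h ≠ 0 →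
        (∃ c : ℂ, c ≠ 0 ∧
          (fun j => MvPolynomial.eval x (φ j)) =
            c • fun j => MvPolynomial.eval y (φ j)) →
        ∃ c' : ℂ, c' ≠ 0 ∧ x = c' • y := by
  obtain ⟨ℓ, hgℓ, hℓ⟩ := exists_eval_ne_zero_and_forall_dotProduct_ne_zero hg (s := {1}) (by simp)
  obtain ⟨m, ℓ', -, -, huniq, -, hℓ', -, hpre, -⟩ := hgen ℓ (by rintro rfl; simp at hℓ) hgℓ
  have hφ : LinearIndependent ℂ φ :=
    linearIndependent_of_unique_hyperplane (by rintro rfl; simp at hℓ) hℓ' huniq hpre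
  refine stmt_16_general φ hhom hφ (by simp) g hg fun ℓ hℓ hgℓ => ?_
  obtain ⟨m, ℓ', -, hmL, -, -, -, -, hpre, -, -, x, -, hxL, hx⟩ := hgen ℓ hℓ hgℓ
  exact ⟨m, ℓ', hmL, hpre, x, hxL, hx⟩
end

section
/- Let F : U → ℝⁿ be continuous on a connected open set U ⊆ ℝ², and suppose F takes the intersection of U with every line from an open set of lines covering U into an affine line of ℝⁿ, and additionally that F is injective with image not contained in a line. Then F is locally the restriction of a projective embedding ℝP² → ℝPⁿ (Möbius–von Staudt type rigidity). -/
/-!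
Lift `F` to homogeneous coordinates, `x ↦ (F x, 1)`. Near a point `a`, choose three points `P`,
`M`, `Q` on a line not through `a`, such that `F` sends the lines joining them to points near
`a` into lines. In projective coordinates `(u, v)` based at `a`, `P`, `Q` the pencils of lines
through `P`, `Q`, `M` become the families `v = const`, `u = const`, `u - v = const`, and so they
do in the target for suitable homogeneous coordinates of `F P` and `F Q`. Hence `F` takes the
form `(u, v) ↦ (f u, g v)` where `f u - g v` depends only on `u - v`, so that `f = g` is
additive near `0` and, being continuous, linear. Thus `F` is projective near `a`.

The images of `a`, `P`, `Q` are not collinear: otherwise `F` would map two distinct lines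
through `P` into one line, and, by continuity and injectivity, both onto neighbourhoods of `F P`
in it.
-/

open Filter Function Module Set Submodule Topology

namespace MoebiusRigidity

theorem image_mem_nhds_of_injOn {β : Type*} [LinearOrder β] [TopologicalSpace β] [OrderTopology β]
    {f : ℝ → β} {s : Set ℝ} {x : ℝ} (hs : s ∈ 𝓝 x) (hf : ContinuousOn f s) (hinj : InjOn f s) :
    f '' s ∈ 𝓝 (f x) := by
  obtain ⟨ε, hε, hεs⟩ := Metric.nhds_basis_closedBall.mem_iff.mp hs
  rw [Real.closedBall_eq_Icc] at hεs
  have hlt : x - ε < x + ε := by linarith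
  have left_mem : x - ε ∈ Icc (x - ε) (x + ε) := left_mem_Icc.mpr hlt.le
  have right_mem : x + ε ∈ Icc (x - ε) (x + ε) := right_mem_Icc.mpr hlt.le
  have mem : x ∈ Icc (x - ε) (x + ε) := ⟨by linarith, by linarith⟩
  rcases (hf.mono hεs).strictMonoOn_of_injOn_Icc' hlt.le (hinj.mono hεs) with hmono | hanti
  · exact mem_of_superset
      (Icc_mem_nhds (hmono left_mem mem (by linarith)) (hmono mem right_mem (by linarith)))
      ((intermediate_value_Icc hlt.le (hf.mono hεs)).trans (image_mono hεs))
  · exact mem_of_superset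
      (Icc_mem_nhds (hanti mem right_mem (by linarith)) (hanti left_mem mem (by linarith)))
      ((intermediate_value_Icc' hlt.le (hf.mono hεs)).trans (image_mono hεs))

/- Integrating `f (x + t) = f x + f t` over `t ∈ [0, y]` expresses `y * f x` symmetrically in `x`
and `y`, so that `y * f x = x * f y`. -/
theorem mul_comm_of_locally_additive {f : ℝ → ℝ} {δ : ℝ}
    (hf : ContinuousOn f (Metric.ball 0 (2 * δ)))
    (hadd : ∀ x y, |x| < δ → |y| < δ → f (x + y) = f x + f y) {x y : ℝ}
    (hx : |x| < δ) (hy : |y| < δ) : y * f x = x * f y := by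
  have hint : ∀ a b, |a| < 2 * δ → |b| < 2 * δ → IntervalIntegrable f MeasureTheory.volume a b :=
    fun a b ha hb => (hf.mono ((convex_ball 0 _).ordConnected.uIcc_subset
      (by simpa using ha) (by simpa using hb))).intervalIntegrable
  have integral_eq : ∀ x y, |x| < δ → |y| < δ →
      y * f x = (∫ t in 0..(x + y), f t) - (∫ t in 0..x, f t) - ∫ t in 0..y, f t := by
    intro x y hx hy
    have h0 : |(0 : ℝ)| < δ := by simpa using (abs_nonneg x).trans_lt hx
    have hδ : δ < 2 * δ := by linarith [(abs_nonneg x).trans_lt hx]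
    have hshift : ∫ t in 0..y, f (x + t) = ∫ t in 0..y, (f x + f t) :=
      intervalIntegral.integral_congr fun t ht => hadd x t hx <| by
        simpa using (convex_ball (0 : ℝ) δ).ordConnected.uIcc_subset
          (by simpa using h0) (by simpa using hy) ht
    rw [intervalIntegral.integral_add (by simp) (hint 0 y (h0.trans hδ) (hy.trans hδ)),
      intervalIntegral.integral_const, intervalIntegral.integral_comp_add_left] at hshift
    have hsplit := intervalIntegral.integral_add_adjacent_intervals
      (hint 0 x (h0.trans hδ) (hx.trans hδ))
      (hint x (x + y) (hx.trans hδ) (by linarith [abs_add_le x y]))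
    simp only [add_zero, sub_zero, smul_eq_mul] at hshift
    linarith
  linarith [integral_eq x y hx hy, add_comm x y ▸ integral_eq y x hy hx]

theorem exists_eq_mul_of_locally_additive {f : ℝ → ℝ} {δ : ℝ} (hδ : 0 < δ)
    (hf : ContinuousOn f (Metric.ball 0 (2 * δ)))
    (hadd : ∀ x y, |x| < δ → |y| < δ → f (x + y) = f x + f y) :
    ∃ c, ∀ x, |x| < δ → f x = c * x := by
  have hhalf : |δ / 2| < δ := by rw [abs_of_pos (half_pos hδ)]; linarith
  refine ⟨f (δ / 2) / (δ / 2), fun x hx => ?_⟩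
  have := mul_comm_of_locally_additive hf hadd hx hhalf
  field_simp
  linarith

section LinearAlgebra

variable {K V ι : Type*} [Field K] [AddCommGroup V] [Module K V]

theorem div_eq_div_of_mem_span_pair {F : Type*} [FunLike F V K] [LinearMapClass F K V K] {φ ψ : F}
    {x y r : V} (hy : y ∈ span K {x, r}) (hφ : φ r = 0) (hψ : ψ r = 0) (hψy : ψ y ≠ 0) :
    φ y / ψ y = φ x / ψ x := by
  obtain ⟨s, t, rfl⟩ := mem_span_pair.mp hy
  simp only [map_add, map_smul, hφ, hψ, smul_eq_mul, mul_zero, add_zero] at hψy ⊢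
  exact mul_div_mul_left _ _ (left_ne_zero_of_mul hψy)

theorem sum_apply_smul_eq_of_mem_span [Fintype ι] [DecidableEq ι] {v : ι → V} {φ : ι → (V →ₗ[K] K)}
    (hφ : ∀ i j, φ i (v j) = (Pi.single i 1 : ι → K) j) {x : V} (hx : x ∈ span K (range v)) :
    ∑ i, φ i x • v i = x := by
  let Φ : V →ₗ[K] V := ∑ i, (φ i).smulRight (v i)
  have heq : EqOn Φ (LinearMap.id : V →ₗ[K] V) (range v) := by
    rintro _ ⟨j, rfl⟩
    simp [Φ, hφ, Pi.single_apply]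
  simpa [Φ] using LinearMap.eqOn_span heq hx

theorem exists_injective_linearMap_apply_eq {V' : Type*} [AddCommGroup V'] [Module K V']
    [Fintype ι] [Nonempty ι] {e : ι → V} {e' : ι → V'} (he : LinearIndependent K e)
    (he' : LinearIndependent K e') (hcard : Fintype.card ι = Module.finrank K V) :
    ∃ T : V →ₗ[K] V', Injective T ∧ ∀ i, T (e i) = e' i := by
  classical
  let b := basisOfLinearIndependentOfCardEqFinrank he hcard
  refine ⟨Fintype.linearCombination K e' ∘ₗ b.equivFun.toLinearMap,
    (linearIndependent_iff_injective_fintypeLinearCombination.mp he').comp b.equivFun.injective,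
    fun i => ?_⟩
  have hb : b i = e i := by simp [b]
  simp [← hb, Finsupp.single_eq_pi_single, Fintype.linearCombination_apply_single]

theorem exists_dual_family [TopologicalSpace K] [IsTopologicalRing K] [TopologicalSpace V]
    [SeparatingDual K V] [Finite ι] [DecidableEq ι] {v : ι → V} (hv : LinearIndependent K v) :
    ∃ φ : ι → StrongDual K V, ∀ i j, φ i (v j) = (Pi.single i 1 : ι → K) j := by
  cases nonempty_fintype ι
  have hsurj := SeparatingDual.dualMap_surjective_iff.mpr
    (linearIndependent_iff_injective_fintypeLinearCombination.mp hv)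
  choose φ hφ using fun i => hsurj (LinearMap.proj i)
  refine ⟨φ, fun i j => ?_⟩
  have := LinearMap.congr_fun (hφ i) (Pi.single j 1)
  simpa [Pi.single_comm, Pi.single_apply, eq_comm] using this

theorem mem_span_pair_smul_iff {x y r : V} {k : K} (hk : k ≠ 0) :
    x ∈ span K {y, k • r} ↔ x ∈ span K {y, r} := by
  rw [span_insert, span_singleton_smul_eq (IsUnit.mk0 k hk), ← span_insert]

end LinearAlgebra

instance instSeparatingDualProd {K V W : Type*} [Ring K] [TopologicalSpace K] [AddCommGroup V]
    [Module K V] [TopologicalSpace V] [SeparatingDual K V] [AddCommGroup W] [Module K W]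
    [TopologicalSpace W] [SeparatingDual K W] : SeparatingDual K (V × W) where
  exists_ne_zero' x hx := by
    by_cases h : x.1 = 0
    · obtain ⟨φ, hφ⟩ := SeparatingDual.exists_ne_zero (R := K) (x := x.2)
        fun h' => hx (Prod.ext h h')
      exact ⟨φ ∘L .snd K V W, hφ⟩
    · obtain ⟨φ, hφ⟩ := SeparatingDual.exists_ne_zero (R := K) h
      exact ⟨φ ∘L .fst K V W, hφ⟩

section Homogeneous

variable {X : Type*}

/-- The lift of the point `x` of the affine chart `X` of the projective space of `X × ℝ` to
normalized homogeneous coordinates. -/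
def homog (x : X) : X × ℝ := (x, 1)

@[fun_prop] theorem continuous_homog [TopologicalSpace X] : Continuous (homog : X → X × ℝ) := by
  unfold homog; fun_prop

variable [AddCommGroup X] [Module ℝ X]

/-- The point of the affine chart `X` with homogeneous coordinates `w`. Vectors with `w.2 = 0`
represent points at infinity, and are sent to the junk value `0`. -/
noncomputable def dehomog (w : X × ℝ) : X := w.2⁻¹ • w.1

@[simp] theorem dehomog_homog (x : X) : dehomog (homog x) = x := by simp [dehomog, homog]

theorem homog_dehomog {w : X × ℝ} (hw : w.2 ≠ 0) : homog (dehomog w) = w.2⁻¹ • w := by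
  ext <;> simp [dehomog, homog, hw]

theorem dehomog_smul {k : ℝ} (hk : k ≠ 0) (w : X × ℝ) : dehomog (k • w) = dehomog w := by
  simp [dehomog, smul_smul, mul_comm, hk]

theorem homog_lineMap (x y : X) (t : ℝ) :
    homog (AffineMap.lineMap x y t) = (1 - t) • homog x + t • homog y := by
  ext <;> simp [homog, AffineMap.lineMap_apply_module]

theorem homog_mem_span_pair_iff {x y z : X} :
    homog y ∈ span ℝ {homog x, homog z} ↔ y ∈ line[ℝ, x, z] := by
  rw [mem_span_pair, mem_affineSpan_pair_iff_exists_lineMap_eq]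
  constructor
  · rintro ⟨s, t, h⟩
    simp only [homog, Prod.smul_mk, Prod.mk_add_mk, Prod.mk.injEq, smul_eq_mul, mul_one] at h
    exact ⟨t, by rw [AffineMap.lineMap_apply_module, ← h.1, ← h.2]; simp⟩
  · rintro ⟨t, rfl⟩
    exact ⟨1 - t, t, (homog_lineMap x z t).symm⟩

theorem exists_homog_eq_smul_add_smul {x y z : X} (h : x ∈ line[ℝ, y, z]) (hy : x ≠ y)
    (hz : x ≠ z) : ∃ α β : ℝ, α ≠ 0 ∧ β ≠ 0 ∧ homog x = α • homog y + β • homog z := by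
  obtain ⟨t, rfl⟩ := mem_affineSpan_pair_iff_exists_lineMap_eq.mp h
  refine ⟨1 - t, t, fun ht => hz ?_, fun ht => hy ?_, homog_lineMap y z t⟩
  · rw [← sub_eq_zero.mp ht, AffineMap.lineMap_apply_one]
  · rw [ht, AffineMap.lineMap_apply_zero]

theorem linearIndependent_homog_iff {ι : Type*} {p : ι → X} :
    LinearIndependent ℝ (fun i => homog (p i)) ↔ AffineIndependent ℝ p := by
  rw [affineIndependent_iff, linearIndependent_iff']
  refine forall₂_congr fun s w => ?_
  simp only [Prod.ext_iff, Prod.fst_sum, Prod.snd_sum, homog, Prod.smul_mk, smul_eq_mul, mul_one,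
    Prod.fst_zero, Prod.snd_zero]
  tauto

theorem linearIndependent_homog_iff_not_collinear {x y z : X} :
    LinearIndependent ℝ ![homog x, homog y, homog z] ↔ ¬Collinear ℝ {x, y, z} := by
  rw [← affineIndependent_iff_not_collinear_set, ← linearIndependent_homog_iff]
  congr! 1
  ext i : 1
  fin_cases i <;> rfl

theorem homog_midpoint (P Q : X) :
    homog (midpoint ℝ P Q) = (2⁻¹ : ℝ) • (homog P + homog Q) := by
  ext <;> simp [homog, midpoint_eq_smul_add, one_add_one_eq_two]

theorem continuousOn_dehomog [TopologicalSpace X] [ContinuousSMul ℝ X] :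
    ContinuousOn (dehomog : X × ℝ → X) {w | w.2 ≠ 0} :=
  (continuousOn_snd.inv₀ fun _ h => h).smul continuousOn_fst

end Homogeneous

section ThreeWeb

theorem exists_eq_mul_of_sub_eq_sub {f g : ℝ → ℝ} {δ : ℝ} (hδ : 0 < δ)
    (hcont : ContinuousOn f (Metric.ball 0 (2 * δ))) (hf₀ : f 0 = 0) (hg₀ : g 0 = 0)
    (hfg : ∀ u v u' v', |u| < 2 * δ → |v| < 2 * δ → |u'| < 2 * δ → |v'| < 2 * δ →
      u - v = u' - v' → f u - g v = f u' - g v') :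
    ∃ c, ∀ u, |u| < δ → f u = c * u ∧ g u = c * u := by
  have zero_lt : |(0 : ℝ)| < 2 * δ := by simpa using hδ
  have lt_two : ∀ u, |u| < δ → |u| < 2 * δ := fun u hu => by linarith
  have heq : ∀ u, |u| < 2 * δ → f u = g u := fun u hu => by
    linarith [hfg u u 0 0 hu hu zero_lt zero_lt (by simp)]
  have hadd : ∀ x y, |x| < δ → |y| < δ → f (x + y) = f x + f y := fun x y hx hy => by
    linarith [heq y (lt_two y hy), hfg (x + y) y x 0 (by linarith [abs_add_le x y])
      (lt_two y hy) (lt_two x hx) zero_lt (by simp)]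
  obtain ⟨c, hc⟩ := exists_eq_mul_of_locally_additive hδ hcont hadd
  exact ⟨c, fun u hu => ⟨hc u hu, heq u (lt_two u hu) ▸ hc u hu⟩⟩

theorem exists_eq_mul_of_web {f g : ℝ × ℝ → ℝ} {δ : ℝ} (hδ : 0 < δ)
    (hcont : ContinuousOn f (Metric.ball 0 (2 * δ))) (hf₀ : f 0 = 0) (hg₀ : g 0 = 0)
    (hf : ∀ w ∈ Metric.ball 0 (2 * δ), ∀ w' ∈ Metric.ball 0 (2 * δ), w.1 = w'.1 → f w' = f w)
    (hg : ∀ w ∈ Metric.ball 0 (2 * δ), ∀ w' ∈ Metric.ball 0 (2 * δ), w.2 = w'.2 → g w' = g w)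
    (hfg : ∀ w ∈ Metric.ball 0 (2 * δ), ∀ w' ∈ Metric.ball 0 (2 * δ),
      w.1 - w.2 = w'.1 - w'.2 → f w' - g w' = f w - g w) :
    ∃ c, ∀ w ∈ Metric.ball 0 δ, f w = c * w.1 ∧ g w = c * w.2 := by
  have mem_ball_iff : ∀ {u v r : ℝ}, (u, v) ∈ Metric.ball 0 r ↔ |u| < r ∧ |v| < r := by
    simp [Prod.norm_def]
  have zero_lt : |(0 : ℝ)| < 2 * δ := by simpa using hδ
  have fst_mem : ∀ {u}, |u| < 2 * δ → (u, (0 : ℝ)) ∈ Metric.ball 0 (2 * δ) :=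
    fun hu => mem_ball_iff.mpr ⟨hu, zero_lt⟩
  have snd_mem : ∀ {v}, |v| < 2 * δ → ((0 : ℝ), v) ∈ Metric.ball 0 (2 * δ) :=
    fun hv => mem_ball_iff.mpr ⟨zero_lt, hv⟩
  have hfg' : ∀ u v, |u| < 2 * δ → |v| < 2 * δ → f (u, 0) - g (0, v) = f (u, v) - g (u, v) :=
    fun u v hu hv => by
      have huv := mem_ball_iff.mpr ⟨hu, hv⟩
      rw [hf _ huv _ (fst_mem hu) rfl, hg _ huv _ (snd_mem hv) rfl]
  obtain ⟨c, hc⟩ := exists_eq_mul_of_sub_eq_sub (f := fun u => f (u, 0)) (g := fun v => g (0, v)) hδ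
    (hcont.comp (by fun_prop) fun u hu => fst_mem (by simpa using hu)) hf₀ hg₀
    fun u v u' v' hu hv hu' hv' h => by
      rw [hfg' u v hu hv, hfg' u' v' hu' hv']
      exact hfg _ (mem_ball_iff.mpr ⟨hu', hv'⟩) _ (mem_ball_iff.mpr ⟨hu, hv⟩) h.symm
  refine ⟨c, fun w hw => ?_⟩
  have hw' := Metric.ball_subset_ball (by linarith : δ ≤ 2 * δ) hw
  obtain ⟨hw₁, hw₂⟩ := mem_ball_iff.mp hw
  exact ⟨(hf _ (fst_mem (by linarith)) w hw' rfl).trans (hc _ hw₁).1,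
    (hg _ (snd_mem (by linarith)) w hw' rfl).trans (hc _ hw₂).2⟩

/-- `γ` maps the parts in `S` of the lines of direction `(1, 0)`, `(0, 1)` and `(1, 1)` to sets
that are, projectively, contained in lines through `p`, `q` and `p + q` respectively. -/
structure IsThreeWeb {V : Type*} [AddCommGroup V] [Module ℝ V] (γ : ℝ × ℝ → V) (p q : V)
    (S : Set (ℝ × ℝ)) : Prop where
  horizontal : ∀ w ∈ S, ∀ w' ∈ S, w.2 = w'.2 → γ w' ∈ span ℝ {γ w, p}
  vertical : ∀ w ∈ S, ∀ w' ∈ S, w.1 = w'.1 → γ w' ∈ span ℝ {γ w, q}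
  diagonal : ∀ w ∈ S, ∀ w' ∈ S, w.1 - w.2 = w'.1 - w'.2 → γ w' ∈ span ℝ {γ w, p + q}

namespace IsThreeWeb

variable {V : Type*} [AddCommGroup V] [Module ℝ V] {γ : ℝ × ℝ → V} {p q : V}

theorem mono {S S' : Set (ℝ × ℝ)} (h : IsThreeWeb γ p q S) (hS : S' ⊆ S) :
    IsThreeWeb γ p q S' where
  horizontal w hw w' hw' := h.horizontal w (hS hw) w' (hS hw')
  vertical w hw w' hw' := h.vertical w (hS hw) w' (hS hw')
  diagonal w hw w' hw' := h.diagonal w (hS hw) w' (hS hw')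

theorem mem_span {S : Set (ℝ × ℝ)} (h : IsThreeWeb γ p q S) {w : ℝ × ℝ} (h₀ : 0 ∈ S)
    (hw₁ : (w.1, 0) ∈ S) (hw : w ∈ S) : γ w ∈ span ℝ (range ![γ 0, p, q]) := by
  obtain ⟨a, b, hab⟩ := mem_span_pair.mp (h.horizontal 0 h₀ (w.1, 0) hw₁ rfl)
  obtain ⟨s, t, hst⟩ := mem_span_pair.mp (h.vertical (w.1, 0) hw₁ w hw rfl)
  rw [← hst, ← hab]
  have mem : ∀ i, ![γ 0, p, q] i ∈ span ℝ (range ![γ 0, p, q]) := fun i => subset_span ⟨i, rfl⟩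
  exact add_mem (smul_mem _ _ (add_mem (smul_mem _ _ (mem 0)) (smul_mem _ _ (mem 1))))
    (smul_mem _ _ (mem 2))

variable [TopologicalSpace V]

theorem exists_div_eq_mul {δ : ℝ} (h : IsThreeWeb γ p q (Metric.ball 0 (2 * δ))) (hδ : 0 < δ)
    (hγ : ContinuousOn γ (Metric.ball 0 (2 * δ))) {φ : Fin 3 → StrongDual ℝ V}
    (hφ : ∀ i j, φ i (![γ 0, p, q] j) = (Pi.single i 1 : Fin 3 → ℝ) j)
    (hne : ∀ w ∈ Metric.ball 0 (2 * δ), φ 0 (γ w) ≠ 0) :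
    ∃ c, ∀ w ∈ Metric.ball (0 : ℝ × ℝ) δ,
      φ 1 (γ w) / φ 0 (γ w) = c * w.1 ∧ φ 2 (γ w) / φ 0 (γ w) = c * w.2 := by
  have hp : φ 0 p = 0 ∧ φ 1 p = 1 ∧ φ 2 p = 0 := ⟨hφ 0 1, hφ 1 1, hφ 2 1⟩
  have hq : φ 0 q = 0 ∧ φ 1 q = 0 ∧ φ 2 q = 1 := ⟨hφ 0 2, hφ 1 2, hφ 2 2⟩
  have h₀ : φ 1 (γ 0) = 0 ∧ φ 2 (γ 0) = 0 := ⟨hφ 1 0, hφ 2 0⟩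
  refine exists_eq_mul_of_web hδ (.div ?_ ?_ hne) (by simp [h₀]) (by simp [h₀])
    (fun w hw w' hw' hww' => div_eq_div_of_mem_span_pair
      (h.vertical w hw w' hw' hww') hq.2.1 hq.1 (hne w' hw'))
    (fun w hw w' hw' hww' => div_eq_div_of_mem_span_pair
      (h.horizontal w hw w' hw' hww') hp.2.2 hp.1 (hne w' hw')) fun w hw w' hw' hww' => ?_
  · exact (φ 1).continuous.comp_continuousOn hγ
  · exact (φ 0).continuous.comp_continuousOn hγ
  · have := div_eq_div_of_mem_span_pair (φ := φ 1 - φ 2) (ψ := φ 0)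
      (h.diagonal w hw w' hw' hww') (by simp [hp, hq]) (by simp [hp, hq]) (hne w' hw')
    simpa only [_root_.sub_apply, sub_div] using this

theorem exists_eventually_eq_smul [SeparatingDual ℝ V] {S : Set (ℝ × ℝ)}
    (h : IsThreeWeb γ p q S) (hS : S ∈ 𝓝 0) (hγ : ContinuousOn γ S)
    (hind : LinearIndependent ℝ ![γ 0, p, q]) :
    ∃ c : ℝ, ∀ᶠ w in 𝓝 0, ∃ k : ℝ, k ≠ 0 ∧ γ w = k • (γ 0 + (c * w.1) • p + (c * w.2) • q) := by
  obtain ⟨φ, hφ⟩ := exists_dual_family hind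
  have hne : ∀ᶠ w in 𝓝 0, φ 0 (γ w) ≠ 0 :=
    ((φ 0).continuous.continuousAt.comp (hγ.continuousAt hS)).eventually_ne (by
      simp [show φ 0 (γ 0) = 1 from hφ 0 0])
  obtain ⟨r, hr, hball⟩ := Metric.mem_nhds_iff.mp (inter_mem hS hne)
  obtain ⟨δ, rfl⟩ : ∃ δ, r = 2 * δ := ⟨r / 2, by ring⟩
  have hδ : 0 < δ := by linarith
  obtain ⟨c, hc⟩ := (h.mono (hball.trans inter_subset_left)).exists_div_eq_mul hδ
    (hγ.mono (hball.trans inter_subset_left)) hφ fun w hw => (hball hw).2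
  refine ⟨c, eventually_of_mem (Metric.ball_mem_nhds 0 hδ) fun w hw => ?_⟩
  have hw' := hball (Metric.ball_subset_ball (by linarith : δ ≤ 2 * δ) hw)
  have hspan : γ w ∈ span ℝ (range ![γ 0, p, q]) := by
    refine h.mem_span (mem_of_mem_nhds hS) (hball ?_).1 hw'.1
    have : |w.1| < δ ∧ |w.2| < δ := by simpa [Prod.norm_def] using hw
    simpa [Prod.norm_def, hδ] using this.1.trans (by linarith)
  refine ⟨φ 0 (γ w), hw'.2, ?_⟩
  rw [← (hc w hw).1, ← (hc w hw).2]
  have := sum_apply_smul_eq_of_mem_span (φ := fun i => (φ i : V →ₗ[ℝ] ℝ)) hφ hspan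
  nth_rw 1 [← this]
  simp [Fin.sum_univ_three, smul_smul, mul_div_cancel₀ _ hw'.2]

end IsThreeWeb

end ThreeWeb

section Collinear

theorem collinear_line {k V P : Type*} [DivisionRing k] [AddCommGroup V] [Module k V]
    [AddTorsor V P] (p q : P) : Collinear k (line[k, p, q] : Set P) := by
  rw [Collinear, ← AffineSubspace.direction_eq_vectorSpan, direction_affineSpan]
  exact collinear_pair k p q

theorem exists_strongDual_injOn_of_collinear {E : Type*} [AddCommGroup E] [Module ℝ E]
    [TopologicalSpace E] [SeparatingDual ℝ E] {s : Set E} (hs : Collinear ℝ s) :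
    ∃ l : StrongDual ℝ E, InjOn l s := by
  obtain ⟨p, v, hv⟩ := (collinear_iff_exists_forall_eq_smul_vadd s).mp hs
  by_cases hv₀ : v = 0
  · refine ⟨0, fun x hx y hy _ => ?_⟩
    obtain ⟨⟨r, rfl⟩, ⟨t, rfl⟩⟩ := And.intro (hv x hx) (hv y hy)
    simp [hv₀]
  · obtain ⟨l, hl⟩ := SeparatingDual.exists_ne_zero (R := ℝ) hv₀
    refine ⟨l, fun x hx y hy hxy => ?_⟩
    obtain ⟨⟨r, rfl⟩, ⟨t, rfl⟩⟩ := And.intro (hv x hx) (hv y hy)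
    simp only [vadd_eq_add, map_add, map_smul, smul_eq_mul, add_left_inj,
      mul_eq_mul_right_iff, hl, or_false] at hxy
    rw [hxy]

variable {X E : Type*} [AddCommGroup X] [Module ℝ X] [TopologicalSpace X]
  [IsTopologicalAddGroup X] [ContinuousSMul ℝ X] [AddCommGroup E] [Module ℝ E] [TopologicalSpace E]
  [SeparatingDual ℝ E] {F : X → E} {U : Set X}

theorem image_inter_line_mem_nhds (hU : IsOpen U) {f : X → ℝ} {P y : X}
    (hf : ContinuousOn f (U ∩ line[ℝ, P, y])) (hinj : InjOn f (U ∩ line[ℝ, P, y])) (hP : P ∈ U)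
    (hy : P ≠ y) : f '' (U ∩ line[ℝ, P, y]) ∈ 𝓝 (f P) := by
  let g : ℝ → X := AffineMap.lineMap P y
  have hg : Continuous g := AffineMap.lineMap_continuous
  have hmaps : MapsTo g (g ⁻¹' U) (U ∩ line[ℝ, P, y]) := fun t ht =>
    ⟨ht, AffineMap.lineMap_mem_affineSpan_pair t P y⟩
  have hnhds : g ⁻¹' U ∈ 𝓝 0 := hg.continuousAt.preimage_mem_nhds (hU.mem_nhds (by simpa [g]))
  have himage := image_mem_nhds_of_injOn hnhds (hf.comp hg.continuousOn hmaps)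
    (hinj.comp (AffineMap.lineMap_injective ℝ hy).injOn hmaps)
  rw [image_comp, comp_apply, show g 0 = P from AffineMap.lineMap_apply_zero P y] at himage
  exact mem_of_superset himage (image_mono hmaps.image_subset)

theorem collinear_of_collinear_image_lines (hU : IsOpen U) (hF : ContinuousOn F U)
    (hinj : InjOn F U) {P y z : X} (hP : P ∈ U)
    (h : Collinear ℝ (F '' (U ∩ (line[ℝ, P, y] ∪ line[ℝ, P, z])))) : Collinear ℝ {P, y, z} := by
  by_contra hPyz
  obtain ⟨l, hl⟩ := exists_strongDual_injOn_of_collinear h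
  rw [inter_union_distrib_left] at hl
  have hf : ContinuousOn (l ∘ F) U := l.continuous.comp_continuousOn hF
  have hlF : InjOn (l ∘ F) (U ∩ line[ℝ, P, y] ∪ U ∩ line[ℝ, P, z]) :=
    hl.comp (hinj.mono (union_subset inter_subset_left inter_subset_left)) (mapsTo_image _ _)
  have hnhds := inter_mem
    (image_inter_line_mem_nhds hU (hf.mono inter_subset_left) (hlF.mono subset_union_left) hP
      (ne₁₂_of_not_collinear hPyz))
    (image_inter_line_mem_nhds hU (hf.mono inter_subset_left) (hlF.mono subset_union_right) hP
      (ne₁₃_of_not_collinear hPyz))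
  obtain ⟨_, ⟨⟨x, hx, rfl⟩, ⟨x', hx', heq⟩⟩, hne⟩ :=
    ((NormedField.nhdsNE_neBot (l (F P))).nonempty_of_mem
      (inter_mem (mem_nhdsWithin_of_mem_nhds hnhds) self_mem_nhdsWithin))
  obtain rfl : x' = x := hlF (.inr hx') (.inl hx) heq
  have hxP : x' ≠ P := by rintro rfl; exact hne rfl
  have mem_line : ∀ {w}, x' ∈ line[ℝ, P, w] → w ∈ line[ℝ, P, x'] := fun hw =>
    (collinear_insert_of_mem_affineSpan_pair hw).mem_affineSpan_of_mem_of_ne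
      (by simp) (by simp) (by simp) hxP.symm
  refine hPyz (Collinear.subset ?_ (collinear_insert_insert_of_mem_affineSpan_pair
    (mem_line hx.2) (mem_line hx'.2)))
  grind

end Collinear

section ThreePencils

variable {X E : Type*} [AddCommGroup X] [Module ℝ X] [AddCommGroup E] [Module ℝ E]

/-- Homogeneous coordinates of the point with parameter `w`. When `a`, `P`, `Q` are not collinear,
`w` is an affine coordinate, vanishing at `a`, on the projective plane they span minus the line
`P Q`. -/
def webPoint (a P Q : X) (w : ℝ × ℝ) : X × ℝ := homog a + w.1 • homog P + w.2 • homog Q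

theorem webPoint_zero (a P Q : X) : webPoint a P Q 0 = homog a := by simp [webPoint]

theorem dehomog_mem_line {u u' : X × ℝ} {C : X} (hu : u.2 ≠ 0) (hu' : u'.2 ≠ 0)
    (h : u' ∈ span ℝ {u, homog C}) : dehomog u' ∈ line[ℝ, C, dehomog u] := by
  rw [← homog_mem_span_pair_iff, homog_dehomog hu, homog_dehomog hu']
  have hu_mem : u.2 • u.2⁻¹ • u ∈ span ℝ {homog C, u.2⁻¹ • u} :=
    smul_mem _ _ (subset_span (by simp))
  rw [smul_inv_smul₀ hu] at hu_mem
  exact smul_mem _ _ (span_le.mpr (pair_subset hu_mem (subset_span (by simp))) h)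

theorem homog_image_mem_span {F : X → E} {U : Set X} {a P Q C : X} {w w' : ℝ × ℝ} {k : ℝ}
    (hC : ∀ y ∈ U, y ∈ line[ℝ, C, dehomog (webPoint a P Q w)] →
      F y ∈ line[ℝ, F C, F (dehomog (webPoint a P Q w))])
    (hw : (webPoint a P Q w).2 ≠ 0) (hw' : (webPoint a P Q w').2 ≠ 0)
    (hU : dehomog (webPoint a P Q w') ∈ U)
    (h : webPoint a P Q w' = webPoint a P Q w + k • homog C) :
    homog (F (dehomog (webPoint a P Q w'))) ∈
      span ℝ {homog (F (dehomog (webPoint a P Q w))), homog (F C)} := by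
  rw [pair_comm, homog_mem_span_pair_iff]
  refine hC _ hU (dehomog_mem_line hw hw' ?_)
  exact h ▸ add_mem (subset_span (by simp)) (smul_mem _ _ (subset_span (by simp)))

variable [TopologicalSpace X]

/-- Lines joining `C` to points near `a` are mapped into lines through `F C`. -/
def MapsPencilNear (F : X → E) (U : Set X) (C a : X) : Prop :=
  ∀ᶠ z in 𝓝 a, ∀ y ∈ U, y ∈ line[ℝ, C, z] → F y ∈ line[ℝ, F C, F z]

theorem mapsPencilNear_of_eventually_collinear [T1Space X] {F : X → E} {U : Set X} {C a : X}
    (hU : IsOpen U) (hinj : InjOn F U) (ha : a ∈ U) (hC : C ∈ U) (hCa : C ≠ a)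
    (h : ∀ᶠ z in 𝓝 a, Collinear ℝ (F '' (U ∩ line[ℝ, C, z]))) : MapsPencilNear F U C a := by
  filter_upwards [h, hU.mem_nhds ha, isOpen_ne.mem_nhds hCa.symm] with z hcol hz hzC y hy hyl
  exact hcol.mem_affineSpan_of_mem_of_ne ⟨C, ⟨hC, left_mem_affineSpan_pair ℝ C z⟩, rfl⟩
    ⟨z, ⟨hz, right_mem_affineSpan_pair ℝ C z⟩, rfl⟩ ⟨y, ⟨hy, hyl⟩, rfl⟩ (hinj.ne hC hz hzC.symm)

/-- `F` is compatible, near `a`, with the pencils of lines with centres `P`, `Q` and the midpoint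
of `P` and `Q`, and with the line containing these centres. -/
structure IsThreePencil (F : X → E) (U : Set X) (a P Q : X) : Prop where
  left_mem : P ∈ U
  right_mem : Q ∈ U
  midpoint_mem : midpoint ℝ P Q ∈ U
  not_collinear : ¬Collinear ℝ {a, P, Q}
  collinear_base : Collinear ℝ (F '' (U ∩ line[ℝ, P, Q]))
  pencil_left : MapsPencilNear F U P a
  pencil_right : MapsPencilNear F U Q a
  pencil_midpoint : MapsPencilNear F U (midpoint ℝ P Q) a

namespace IsThreePencil

variable {F : X → E} {U : Set X} {a P Q : X}

theorem ne (h : IsThreePencil F U a P Q) : P ≠ Q := ne₂₃_of_not_collinear h.not_collinear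

theorem apply_mem_line (h : IsThreePencil F U a P Q) (hinj : InjOn F U) {y : X} (hy : y ∈ U)
    (hyl : y ∈ line[ℝ, P, Q]) : F y ∈ line[ℝ, F P, F Q] :=
  h.collinear_base.mem_affineSpan_of_mem_of_ne
    ⟨P, ⟨h.left_mem, left_mem_affineSpan_pair ℝ P Q⟩, rfl⟩
    ⟨Q, ⟨h.right_mem, right_mem_affineSpan_pair ℝ P Q⟩, rfl⟩ ⟨y, ⟨hy, hyl⟩, rfl⟩
    (hinj.ne h.left_mem h.right_mem h.ne)

theorem exists_homog_midpoint_eq (h : IsThreePencil F U a P Q) (hinj : InjOn F U) :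
    ∃ α β : ℝ, α ≠ 0 ∧ β ≠ 0 ∧
      homog (F (midpoint ℝ P Q)) = α • homog (F P) + β • homog (F Q) :=
  exists_homog_eq_smul_add_smul
    (h.apply_mem_line hinj h.midpoint_mem (AffineMap.lineMap_mem_affineSpan_pair _ P Q))
    (hinj.ne h.midpoint_mem h.left_mem (by simpa [midpoint_eq_left_iff] using h.ne))
    (hinj.ne h.midpoint_mem h.right_mem (by simpa [midpoint_eq_right_iff] using h.ne))

theorem not_collinear_image [IsTopologicalAddGroup X] [ContinuousSMul ℝ X] [TopologicalSpace E]
    [SeparatingDual ℝ E] (h : IsThreePencil F U a P Q) (hU : IsOpen U) (hF : ContinuousOn F U)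
    (hinj : InjOn F U) (ha : a ∈ U) : ¬Collinear ℝ {F a, F P, F Q} := by
  intro hcol
  have hPQ := hinj.ne h.left_mem h.right_mem h.ne
  have hPa := hinj.ne h.left_mem ha (ne₁₂_of_not_collinear h.not_collinear).symm
  have hline : line[ℝ, F P, F a] = line[ℝ, F P, F Q] := by
    rw [hcol.affineSpan_eq_of_ne (by simp) (by simp) hPa,
      hcol.affineSpan_eq_of_ne (by simp) (by simp) hPQ]
  have hsub : F '' (U ∩ (line[ℝ, P, Q] ∪ line[ℝ, P, a])) ⊆ line[ℝ, F P, F Q] := by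
    rintro _ ⟨y, ⟨hy, hyQ | hya⟩, rfl⟩
    · exact h.apply_mem_line hinj hy hyQ
    · exact hline ▸ h.pencil_left.self_of_nhds y hy hya
  have := collinear_of_collinear_image_lines hU hF hinj h.left_mem
    (Collinear.subset hsub (collinear_line (F P) (F Q)))
  exact h.not_collinear (this.subset (by grind))

end IsThreePencil

end ThreePencils

section Web

variable {X E : Type*} [AddCommGroup X] [Module ℝ X] [TopologicalSpace X] [IsTopologicalAddGroup X]
  [ContinuousSMul ℝ X] [AddCommGroup E] [Module ℝ E] {F : X → E} {U : Set X} {a P Q : X}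

theorem continuous_webPoint (a P Q : X) : Continuous (webPoint a P Q) := by
  unfold webPoint
  fun_prop

theorem tendsto_dehomog_webPoint (a P Q : X) :
    Tendsto (fun w => dehomog (webPoint a P Q w)) (𝓝 0) (𝓝 a) := by
  have hat : ContinuousAt dehomog (webPoint a P Q 0) := continuousOn_dehomog.continuousAt
    ((isOpen_ne_fun continuous_snd continuous_const).mem_nhds (by simp [webPoint, homog]))
  simpa [ContinuousAt, webPoint_zero, Function.comp_def] using
    hat.comp (continuous_webPoint a P Q).continuousAt

theorem IsThreePencil.exists_isThreeWeb (h : IsThreePencil F U a P Q) (hU : IsOpen U) (ha : a ∈ U)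
    {α β : ℝ} (hα : α ≠ 0) (hβ : β ≠ 0)
    (hαβ : homog (F (midpoint ℝ P Q)) = α • homog (F P) + β • homog (F Q)) :
    ∃ S ∈ 𝓝 (0 : ℝ × ℝ),
      (∀ w ∈ S, (webPoint a P Q w).2 ≠ 0 ∧ dehomog (webPoint a P Q w) ∈ U) ∧
      IsThreeWeb (fun w => homog (F (dehomog (webPoint a P Q w)))) (α • homog (F P))
        (β • homog (F Q)) S := by
  have hne : ∀ᶠ w in 𝓝 0, (webPoint a P Q w).2 ≠ 0 :=
    ((continuous_webPoint a P Q).snd.tendsto 0).eventually_ne (by simp [webPoint, homog])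
  have hmem := (tendsto_dehomog_webPoint a P Q).eventually
    ((hU.eventually_mem ha).and (h.pencil_left.and (h.pencil_right.and h.pencil_midpoint)))
  refine ⟨_, hne.and hmem, fun w hw => ⟨hw.1, hw.2.1⟩, ?_, ?_, ?_⟩
  · rintro w ⟨hw, -, hP, -⟩ w' ⟨hw', hwU', -⟩ hww'
    rw [mem_span_pair_smul_iff hα]
    refine homog_image_mem_span (k := w'.1 - w.1) hP hw hw' hwU' ?_
    simp only [webPoint, hww']
    module
  · rintro w ⟨hw, -, -, hQ, -⟩ w' ⟨hw', hwU', -⟩ hww'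
    rw [mem_span_pair_smul_iff hβ]
    refine homog_image_mem_span (k := w'.2 - w.2) hQ hw hw' hwU' ?_
    simp only [webPoint, hww']
    module
  · rintro w ⟨hw, -, -, -, hM⟩ w' ⟨hw', hwU', -⟩ hww'
    rw [← hαβ]
    refine homog_image_mem_span (k := 2 * (w'.2 - w.2)) hM hw hw' hwU' ?_
    obtain ⟨d, hd⟩ : ∃ d, w'.1 = w.1 + d ∧ w'.2 = w.2 + d := ⟨w'.2 - w.2, by linarith, by ring⟩
    simp only [webPoint, homog_midpoint, hd]
    module

theorem eventually_exists_homog_eq_smul_webPoint [T2Space X] (hX : finrank ℝ X = 2)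
    (h : ¬Collinear ℝ {a, P, Q}) {p : ℝ × ℝ → Prop} (hp : ∀ᶠ w in 𝓝 0, p w) :
    ∀ᶠ x in 𝓝 a, ∃ w, p w ∧ ∃ ζ : ℝ, ζ ≠ 0 ∧ homog x = ζ • webPoint a P Q w := by
  have : FiniteDimensional ℝ X := finite_of_finrank_pos (hX ▸ two_pos)
  have hind := linearIndependent_homog_iff_not_collinear.mpr h
  let b : Basis (Fin 3) ℝ (X × ℝ) := basisOfLinearIndependentOfCardEqFinrank hind
    (by simp [finrank_prod, hX])
  have hb : ⇑b = ![homog a, homog P, homog Q] := coe_basisOfLinearIndependentOfCardEqFinrank ..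
  have hcoord : ∀ i, Continuous fun x => b.coord i (homog x) := fun i =>
    (b.coord i).continuous_of_finiteDimensional.comp continuous_homog
  have hcoord_a : ∀ i, b.coord i (homog a) = (Pi.single 0 1 : Fin 3 → ℝ) i := fun i => by
    rw [show homog a = b 0 by simp [hb], b.coord_apply, b.repr_self, Finsupp.single_eq_pi_single]
  have hne : ∀ᶠ x in 𝓝 a, b.coord 0 (homog x) ≠ 0 :=
    (hcoord 0).continuousAt.eventually_ne (by simp [hcoord_a])
  have hlim : ∀ i ≠ 0, Tendsto (fun x => b.coord i (homog x) / b.coord 0 (homog x)) (𝓝 a) (𝓝 0) :=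
    fun i hi => by
      simpa [Pi.div_def, hcoord_a, hi] using ((hcoord i).tendsto a).div ((hcoord 0).tendsto a)
        (by simp [hcoord_a])
  have hlim₁₂ := (hlim 1 (by simp)).prodMk_nhds (hlim 2 (by simp))
  filter_upwards [hne, hlim₁₂.eventually hp] with x hx hpx
  refine ⟨_, hpx, _, hx, ?_⟩
  conv_lhs => rw [← b.sum_repr (homog x)]
  rw [b.coord_apply] at hx
  simp [Fin.sum_univ_three, hb, webPoint, smul_smul, mul_div_cancel₀ _ hx]

theorem IsThreePencil.exists_eventually_homog_eq [T2Space X] [TopologicalSpace E]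
    [SeparatingDual ℝ E] (h : IsThreePencil F U a P Q) (hX : finrank ℝ X = 2) (hU : IsOpen U)
    (hF : ContinuousOn F U) (hinj : InjOn F U) (ha : a ∈ U) :
    ∃ (p q : E × ℝ) (c : ℝ), LinearIndependent ℝ ![homog (F a), p, q] ∧
      ∀ᶠ x in 𝓝 a, ∃ w : ℝ × ℝ, (∃ ζ : ℝ, ζ ≠ 0 ∧ homog x = ζ • webPoint a P Q w) ∧
        ∃ k : ℝ, k ≠ 0 ∧ homog (F x) = k • (homog (F a) + (c * w.1) • p + (c * w.2) • q) := by
  obtain ⟨α, β, hα, hβ, hαβ⟩ := h.exists_homog_midpoint_eq hinj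
  obtain ⟨S, hS, hSU, hweb⟩ := h.exists_isThreeWeb hU ha hα hβ hαβ
  have hind : LinearIndependent ℝ ![homog (F a), α • homog (F P), β • homog (F Q)] := by
    have := (linearIndependent_homog_iff_not_collinear.mpr
      (h.not_collinear_image hU hF hinj ha)).units_smul ![1, Units.mk0 α hα, Units.mk0 β hβ]
    convert this using 1
    ext i : 1
    fin_cases i <;> simp
  have hγ : ContinuousOn (fun w => homog (F (dehomog (webPoint a P Q w)))) S :=
    continuous_homog.comp_continuousOn <| hF.comp
      (continuousOn_dehomog.comp (continuous_webPoint a P Q).continuousOn fun w hw => (hSU w hw).1)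
      fun w hw => (hSU w hw).2
  obtain ⟨c, hc⟩ := hweb.exists_eventually_eq_smul hS hγ (by simpa [webPoint_zero] using hind)
  refine ⟨_, _, c, hind, ?_⟩
  filter_upwards [eventually_exists_homog_eq_smul_webPoint hX h.not_collinear hc]
    with x ⟨w, ⟨k, hk, hkw⟩, ζ, hζ, hx⟩
  have hxw : dehomog (webPoint a P Q w) = x := by
    rw [← dehomog_smul hζ, ← hx, dehomog_homog]
  exact ⟨w, ⟨ζ, hζ, hx⟩, k, hk, by simpa [hxw, webPoint_zero] using hkw⟩

theorem IsThreePencil.exists_linearMap [T2Space X] [TopologicalSpace E]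
    [SeparatingDual ℝ E] (h : IsThreePencil F U a P Q) (hX : finrank ℝ X = 2) (hU : IsOpen U)
    (hF : ContinuousOn F U) (hinj : InjOn F U) (ha : a ∈ U) :
    ∃ T : X × ℝ →ₗ[ℝ] E × ℝ, Injective T ∧
      ∀ᶠ x in 𝓝 a, ∃ k : ℝ, k ≠ 0 ∧ T (homog x) = k • homog (F x) := by
  obtain ⟨p, q, c, hind, hFx⟩ := h.exists_eventually_homog_eq hX hU hF hinj ha
  have hc : c ≠ 0 := by
    rintro rfl
    have : Nontrivial X := nontrivial_of_finrank_pos (R := ℝ) (hX ▸ two_pos)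
    have := punctured_nhds_neBot ℝ X a
    obtain ⟨x, ⟨⟨w, -, k, hk, hkx⟩, hxU⟩, hxa⟩ :=
      (((hFx.and (hU.eventually_mem ha)).filter_mono nhdsWithin_le_nhds).and
        (eventually_mem_nhdsWithin : ∀ᶠ x in 𝓝[≠] a, x ∈ ({a}ᶜ : Set X))).exists
    refine hxa (hinj hxU ha ?_)
    rw [← dehomog_homog (F x), hkx]
    simp [dehomog_smul hk]
  have hind' : LinearIndependent ℝ ![homog (F a), c • p, c • q] := by
    convert hind.units_smul ![1, Units.mk0 c hc, Units.mk0 c hc] using 1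
    ext i : 1
    fin_cases i <;> simp
  have : FiniteDimensional ℝ X := finite_of_finrank_pos (hX ▸ two_pos)
  have hind₀ := linearIndependent_homog_iff_not_collinear.mpr h.not_collinear
  obtain ⟨T, hT, hTe⟩ :=
    exists_injective_linearMap_apply_eq hind₀ hind' (by simp [finrank_prod, hX])
  have hTa : T (homog a) = homog (F a) := hTe 0
  have hTP : T (homog P) = c • p := hTe 1
  have hTQ : T (homog Q) = c • q := hTe 2
  refine ⟨T, hT, ?_⟩
  filter_upwards [hFx] with x ⟨w, ⟨ζ, hζ, hx⟩, k, hk, hkx⟩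
  refine ⟨ζ * k⁻¹, mul_ne_zero hζ (inv_ne_zero hk), ?_⟩
  rw [hx, hkx, mul_smul, inv_smul_smul₀ hk]
  simp only [webPoint, map_smul, map_add, hTa, hTP, hTQ, smul_smul, mul_comm c]

end Web

section Existence

theorem line_add_smul_eq {k V P : Type*} [Field k] [AddCommGroup V] [Module k V] [AddTorsor V P]
    {c : k} (hc : c ≠ 0) (p : P) (v : V) : line[k, p, c • v +ᵥ p] = line[k, p, v +ᵥ p] := by
  ext x
  simp only [mem_affineSpan_pair_iff_exists_lineMap_eq, AffineMap.lineMap_apply, vadd_vsub,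
    smul_smul]
  exact ⟨fun ⟨r, hr⟩ => ⟨r * c, hr⟩, fun ⟨r, hr⟩ => ⟨r / c, by rwa [div_mul_cancel₀ r hc]⟩⟩

theorem exists_notMem_span_singleton {K V : Type*} [Field K] [AddCommGroup V] [Module K V]
    (hV : 1 < finrank K V) (ξ : V) : ∃ η, η ∉ span K {ξ} := by
  by_contra! h
  exact (finrank_le_one ξ fun w => mem_span_singleton.mp (h w)).not_gt hV

variable {X E : Type*} [AddCommGroup X] [Module ℝ X] {a : X}

/-- A point of the line of direction `ξ` through `a - r • η`; the points with parameters `s = 1`,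
`s = 2`, `s = 3` serve as centres of pencils of lines. The line joining `center a η ξ r s` to `a`
has direction `s⁻¹ • η + ξ`, so it is close to direction `ξ` when `η` is small. -/
def center (a η ξ : X) (r s : ℝ) : X := a - r • (η + s • ξ)

theorem line_center_eq {η ξ : X} {r s t : ℝ} (hr : r ≠ 0) (hst : s ≠ t) :
    line[ℝ, center a η ξ r s, center a η ξ r t] =
      line[ℝ, center a η ξ r s, ξ +ᵥ center a η ξ r s] := by
  rw [← line_add_smul_eq (mul_ne_zero hr (sub_ne_zero.mpr hst))]
  congr 3
  simp only [center, vadd_eq_add]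
  module

theorem not_collinear_center {η ξ : X} {r s t : ℝ} (hr : r ≠ 0) (hst : s ≠ t) (hξ : ξ ≠ 0)
    (hη : η ∉ span ℝ {ξ}) : ¬Collinear ℝ {a, center a η ξ r s, center a η ξ r t} := by
  intro hcol
  have hne : center a η ξ r s ≠ center a η ξ r t := by
    simpa [center, hr] using (smul_left_injective ℝ hξ).ne hst
  have ha := hcol.mem_affineSpan_of_mem_of_ne (p₃ := a) (by simp) (by simp) (by simp) hne
  rw [line_center_eq hr hst, mem_affineSpan_pair_iff_exists_lineMap_eq] at ha
  obtain ⟨c, hc⟩ := ha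
  rw [AffineMap.lineMap_apply, vadd_vsub, vadd_eq_add, ← eq_sub_iff_add_eq, center,
    sub_sub_cancel] at hc
  refine hη (mem_span_singleton.mpr ⟨r⁻¹ * c - s, ?_⟩)
  rw [sub_smul, mul_smul, hc, inv_smul_smul₀ hr, add_sub_cancel_right]

theorem midpoint_center_one_three (a η ξ : X) (r : ℝ) :
    midpoint ℝ (center a η ξ r 1) (center a η ξ r 3) = center a η ξ r 2 := by
  rw [midpoint_eq_smul_add, invOf_eq_inv, center, center, center]
  module

variable [TopologicalSpace X] [IsTopologicalAddGroup X] [ContinuousSMul ℝ X] [T1Space X]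
  [AddCommGroup E] [Module ℝ E] {F : X → E} {U : Set X}

theorem mapsPencilNear_sub_smul (hU : IsOpen U) (hinj : InjOn F U) (ha : a ∈ U) {t : ℝ} {v : X}
    (ht : t ≠ 0) (hv : v ≠ 0) (hC : a - t • v ∈ U)
    (h : ∀ᶠ p : X × X in 𝓝 (a, v), Collinear ℝ (F '' (U ∩ line[ℝ, p.1, p.2 +ᵥ p.1]))) :
    MapsPencilNear F U (a - t • v) a := by
  refine mapsPencilNear_of_eventually_collinear hU hinj ha hC (by simp [ht, hv]) ?_
  have hlim : Tendsto (fun z => (z, t⁻¹ • (z - (a - t • v)))) (𝓝 a) (𝓝 (a, v)) := by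
    refine Continuous.tendsto' (by fun_prop) _ _ ?_
    rw [sub_sub_cancel, inv_smul_smul₀ ht]
  filter_upwards [hlim.eventually h] with z hz
  rwa [pair_comm, show a - t • v = (-1 : ℝ) • (z - (a - t • v)) +ᵥ z by simp,
    line_add_smul_eq (by simp), ← line_add_smul_eq (inv_ne_zero ht)]

theorem mapsPencilNear_center (hU : IsOpen U) (hinj : InjOn F U) (ha : a ∈ U) {r s : ℝ} {η ξ : X}
    (hr : r ≠ 0) (hs : s ≠ 0) (hη : η ∉ span ℝ {ξ}) (hC : center a η ξ r s ∈ U)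
    (h : ∀ᶠ p : X × X in 𝓝 (a, s⁻¹ • η + ξ),
      Collinear ℝ (F '' (U ∩ line[ℝ, p.1, p.2 +ᵥ p.1]))) :
    MapsPencilNear F U (center a η ξ r s) a := by
  have hcenter : center a η ξ r s = a - (r * s) • (s⁻¹ • η + ξ) := by
    rw [center, mul_smul, smul_add s, smul_inv_smul₀ hs]
  rw [hcenter] at hC ⊢
  refine mapsPencilNear_sub_smul hU hinj ha (mul_ne_zero hr hs) (fun h => hη ?_) hC h
  rw [← smul_inv_smul₀ hs η, eq_neg_of_add_eq_zero_left h]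
  exact smul_mem _ _ (neg_mem (mem_span_singleton_self ξ))

theorem exists_isThreePencil (hX : finrank ℝ X = 2) (hU : IsOpen U) (hinj : InjOn F U)
    (ha : a ∈ U) {ξ : X} (hξ : ξ ≠ 0)
    (h : ∀ᶠ p : X × X in 𝓝 (a, ξ), Collinear ℝ (F '' (U ∩ line[ℝ, p.1, p.2 +ᵥ p.1]))) :
    ∃ P Q, IsThreePencil F U a P Q := by
  obtain ⟨η, hη⟩ := exists_notMem_span_singleton (hX ▸ one_lt_two) ξ
  have hdir : ∀ s : ℝ, Tendsto (fun ε : ℝ => (a, s⁻¹ • ε • η + ξ)) (𝓝 0) (𝓝 (a, ξ)) := fun s =>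
    Continuous.tendsto' (by fun_prop) _ _ (by simp)
  obtain ⟨ε, hpencil, hε⟩ := ((((toFinite ({1, 2, 3} : Set ℝ)).eventually_all.mpr fun s _ =>
    (hdir s).eventually h.eventually_nhds).filter_mono nhdsWithin_le_nhds).and
    eventually_mem_nhdsWithin : ∀ᶠ ε in 𝓝[≠] (0 : ℝ), _).exists
  have hlim : ∀ s, Tendsto (fun r => center a (ε • η) ξ r s) (𝓝 0) (𝓝 a) := fun s =>
    Continuous.tendsto' (by unfold center; fun_prop) 0 a (by simp [center])
  have hmem := (toFinite ({1, 2, 3} : Set ℝ)).eventually_all.mpr fun s _ =>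
    (hlim s).eventually (hU.eventually_mem ha)
  have hbase := ((hlim 1).prodMk_nhds (tendsto_const_nhds (x := ξ))).eventually h
  obtain ⟨r, ⟨hmem, hbase⟩, hr⟩ := (((hmem.and hbase).filter_mono nhdsWithin_le_nhds).and
    eventually_mem_nhdsWithin : ∀ᶠ r in 𝓝[≠] (0 : ℝ), _).exists
  have hεη : ε • η ∉ span ℝ {ξ} := by rwa [smul_mem_iff _ hε]
  have hmaps : ∀ s ∈ ({1, 2, 3} : Set ℝ), MapsPencilNear F U (center a (ε • η) ξ r s) a :=
    fun s hs => mapsPencilNear_center hU hinj ha hr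
      (by rcases hs with rfl | rfl | rfl <;> norm_num) hεη (hmem s hs) (hpencil s hs)
  have hmid := midpoint_center_one_three a (ε • η) ξ r
  exact ⟨center a (ε • η) ξ r 1, center a (ε • η) ξ r 3,
    { left_mem := hmem 1 (by simp)
      right_mem := hmem 3 (by simp)
      midpoint_mem := hmid ▸ hmem 2 (by simp)
      not_collinear := not_collinear_center hr (by norm_num) hξ hεη
      collinear_base := by rwa [line_center_eq hr (by norm_num)]
      pencil_left := hmaps 1 (by simp)
      pencil_right := hmaps 3 (by simp)
      pencil_midpoint := hmid ▸ hmaps 2 (by simp) }⟩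

end Existence

section Coordinates

/-- `Fin.snoc` as a linear equivalence, identifying the normalized homogeneous coordinates
`homog x` of `x : Fin m → R` with `Fin.snoc x 1`. -/
def snocLinearEquiv (R : Type*) [CommSemiring R] (m : ℕ) :
    ((Fin m → R) × R) ≃ₗ[R] (Fin (m + 1) → R) :=
  LinearEquiv.prodComm R (Fin m → R) R ≪≫ₗ
    { Fin.snocEquiv (fun _ => R) with
      map_add' := fun x y => by ext i; cases i using Fin.lastCases <;> simp
      map_smul' := fun c x => by ext i; cases i using Fin.lastCases <;> simp }

theorem snocLinearEquiv_apply {R : Type*} [CommSemiring R] {m : ℕ} (x : (Fin m → R) × R) :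
    snocLinearEquiv R m x = Fin.snoc x.1 x.2 := rfl

theorem exists_isOpen_forall_eq_div {m n : ℕ} {U : Set (Fin m → ℝ)} {a : Fin m → ℝ}
    {F : (Fin m → ℝ) → Fin n → ℝ} (hU : IsOpen U) (ha : a ∈ U)
    (h : ∃ T : (Fin m → ℝ) × ℝ →ₗ[ℝ] (Fin n → ℝ) × ℝ, Injective T ∧
      ∀ᶠ x in 𝓝 a, ∃ k : ℝ, k ≠ 0 ∧ T (x, 1) = k • (F x, 1)) :
    ∃ V : Set (Fin m → ℝ), IsOpen V ∧ a ∈ V ∧ V ⊆ U ∧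
      ∃ T : (Fin (m + 1) → ℝ) →ₗ[ℝ] (Fin (n + 1) → ℝ), Injective T ∧
        ∀ x ∈ V, T (Fin.snoc x 1) (Fin.last n) ≠ 0 ∧
          ∀ i : Fin n, F x i = T (Fin.snoc x 1) i.castSucc / T (Fin.snoc x 1) (Fin.last n) := by
  obtain ⟨T, hT, hTF⟩ := h
  obtain ⟨V, hV, hVo, haV⟩ := eventually_nhds_iff.mp (hTF.and (hU.eventually_mem ha))
  refine ⟨V, hVo, haV, fun x hx => (hV x hx).2,
    (snocLinearEquiv ℝ n).toLinearMap ∘ₗ T ∘ₗ (snocLinearEquiv ℝ m).symm.toLinearMap,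
    (snocLinearEquiv ℝ n).injective.comp (hT.comp (snocLinearEquiv ℝ m).symm.injective),
    fun x hx => ?_⟩
  obtain ⟨k, hk, hkx⟩ := (hV x hx).1
  have hsymm : (snocLinearEquiv ℝ m).symm (Fin.snoc x 1) = (x, 1) :=
    (snocLinearEquiv ℝ m).symm_apply_apply (x, 1)
  simp [hsymm, hkx, snocLinearEquiv_apply, hk]

theorem collinear_image_inter_line_iff {k V V' : Type*} [DivisionRing k] [AddCommGroup V]
    [Module k V] [AddCommGroup V'] [Module k V'] {F : V → V'} {U : Set V} {a ξ : V} :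
    Collinear k (F '' (U ∩ line[k, a, a + ξ])) ↔
      ∃ p v : V', ∀ t : k, a + t • ξ ∈ U → ∃ s : k, F (a + t • ξ) = p + s • v := by
  have mem_line : ∀ x, x ∈ line[k, a, a + ξ] ↔ ∃ t : k, a + t • ξ = x := fun x => by
    simp [mem_affineSpan_pair_iff_exists_lineMap_eq, AffineMap.lineMap_apply_module', add_comm]
  simp only [collinear_iff_exists_forall_eq_smul_vadd, forall_mem_image, mem_inter_iff,
    SetLike.mem_coe, mem_line, vadd_eq_add, add_comm (_ • _ : V')]
  refine exists₂_congr fun p v => ⟨fun h t ht => h ⟨ht, t, rfl⟩, ?_⟩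
  rintro h _ ⟨ht, t, rfl⟩
  exact h t ht

end Coordinates

end MoebiusRigidity

open MoebiusRigidity

theorem stmt_18_general {X E : Type*} [AddCommGroup X] [Module ℝ X] [TopologicalSpace X]
    [IsTopologicalAddGroup X] [ContinuousSMul ℝ X] [T2Space X] [AddCommGroup E] [Module ℝ E]
    [TopologicalSpace E] [SeparatingDual ℝ E] (hX : finrank ℝ X = 2) {U : Set X} (hU : IsOpen U)
    {F : X → E} (hcont : ContinuousOn F U) (hinj : InjOn F U) {a ξ : X} (ha : a ∈ U) (hξ : ξ ≠ 0)
    (hlines : ∀ᶠ p : X × X in 𝓝 (a, ξ), Collinear ℝ (F '' (U ∩ line[ℝ, p.1, p.1 + p.2]))) :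
    ∃ T : X × ℝ →ₗ[ℝ] E × ℝ, Injective T ∧
      ∀ᶠ x in 𝓝 a, ∃ k : ℝ, k ≠ 0 ∧ T (x, 1) = k • (F x, 1) := by
  obtain ⟨P, Q, hPQ⟩ := exists_isThreePencil (F := F) hX hU hinj ha hξ
    (by simpa only [vadd_eq_add, add_comm] using hlines)
  exact hPQ.exists_linearMap hX hU hcont hinj ha

/-- Möbius–von Staudt rigidity: a continuous injective map `F : U → ℝⁿ` on a
connected open `U ⊆ ℝ²`, taking the intersection of `U` with every line from an
open set of lines covering `U` into an affine line, and whose image is not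
contained in a line, is locally the restriction of a projective embedding
`ℝP² → ℝPⁿ` (induced by an injective linear map `ℝ³ → ℝ^{n+1}`, with `U` and
`ℝⁿ` viewed in affine charts). -/
theorem stmt_18 (n : ℕ) (U : Set (Fin 2 → ℝ)) (hU : IsOpen U)
    (hUconn : IsConnected U)
    (F : (Fin 2 → ℝ) → (Fin n → ℝ)) (hcont : ContinuousOn F U)
    (W : Set ((Fin 2 → ℝ) × (Fin 2 → ℝ))) (hW : IsOpen W)
    (hWne : ∀ aξ ∈ W, aξ.2 ≠ 0)
    (hcover : ∀ a ∈ U, ∃ ξ : Fin 2 → ℝ, (a, ξ) ∈ W)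
    (hlines : ∀ aξ ∈ W, ∃ (p v : Fin n → ℝ), ∀ t : ℝ,
      aξ.1 + t • aξ.2 ∈ U → ∃ s : ℝ, F (aξ.1 + t • aξ.2) = p + s • v)
    (hinj : Set.InjOn F U)
    (hnl : ¬∃ (p v : Fin n → ℝ), ∀ x ∈ U, ∃ t : ℝ, F x = p + t • v) :
    ∀ a ∈ U, ∃ V : Set (Fin 2 → ℝ), IsOpen V ∧ a ∈ V ∧ V ⊆ U ∧
      ∃ T : (Fin 3 → ℝ) →ₗ[ℝ] (Fin (n + 1) → ℝ),
        Function.Injective T ∧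
        ∀ x ∈ V,
          T (Fin.snoc x 1) (Fin.last n) ≠ 0 ∧
          ∀ i : Fin n,
            F x i = T (Fin.snoc x 1) i.castSucc / T (Fin.snoc x 1) (Fin.last n) := by
  intro a ha
  obtain ⟨ξ, haξ⟩ := hcover a ha
  refine exists_isOpen_forall_eq_div hU ha
    (stmt_18_general (by simp) hU hcont hinj ha (hWne _ haξ) ?_)
  filter_upwards [hW.mem_nhds haξ] with p hp
  exact collinear_image_inter_line_iff.mpr (hlines p hp)
end
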